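/- arXiv:1410.6800 — 2 statements merged into one kernel-verified Lean document; each statement's English description precedes it below -/
import Mathlib

section
/- Let f be a strictly convex continuous function on a compact interval [a,b] and let ε > 0. Then there exists δ > 0 such that: for every complex Hilbert space 𝓗, every closed subspace M of 𝓗 with orthogonal projection P onto M, and every self-adjoint bounded operator H on 𝓗 with σ(H) ⊆ [a,b], if ‖f(pr(H)) − pr(f(H))‖ < δ then ‖P H − H P‖ < ε, where pr denotes compression to M. -/
set_option synthInstance.maxHeartbeats 400000
set_option maxHeartbeats 800000

open scoped InnerProductSpace
open ContinuousLinearMap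

universe u v

/-!
Write `A = ι* H ι` and call `f(A) - ι* f(H) ι` the defect; subtracting an affine function from `f`
leaves it unchanged. Around the points `s` of a fine grid, `f` exceeds a supporting line at `s` by
at most a second difference of `f`, and these second differences telescope to a small total. So
there is a partition of unity, with pieces supported near the points `s`, on which `f` minus its
supporting lines is small *in sum*, while strict convexity bounds the same differences from below
away from `s`. If the defect is small, Chebyshev's inequality applied piece by piece shows that
`g(H) ι h(A)` is small whenever `g` and `h` have separated supports.

Replacing `H` and `A` by step sums over a coarse partition of unity `φ`, the operator `H ι - ι A`
becomes `∑ (s i - s j) φ i(H) ι φ j(A)`. Schur's test bounds the near-diagonal terms by the mesh,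
and the preceding paragraph bounds the others. Finally `[P, H] = ι T* - T ι*` for `T = H ι - ι A`.
-/

section Scalar

open Set Filter Topology

/-- The Bregman divergence of `f` based at `s`, with `c` in the role of the derivative `f' s`:
the height at `t` of `f` above the line of slope `c` through `(s, f s)`. -/
def bregman (f : ℝ → ℝ) (c s t : ℝ) : ℝ := f t - f s - c * (t - s)

lemma continuousOn_bregman {f : ℝ → ℝ} {S : Set ℝ} (hf : ContinuousOn f S) (c s : ℝ) :
    ContinuousOn (bregman f c s) S := by
  unfold bregman
  fun_prop

lemma convexOn_bregman {f : ℝ → ℝ} {S : Set ℝ} (hf : ConvexOn ℝ S f) (c s : ℝ) :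
    ConvexOn ℝ S (bregman f c s) := by
  refine ⟨hf.1, fun x hx y hy p q hp hq hpq => ?_⟩
  have hfpq := hf.2 hx hy hp hq hpq
  simp only [bregman, smul_eq_mul] at hfpq ⊢
  linear_combination hfpq + (f s - c * s) * hpq

lemma exists_bregman_nonneg {f : ℝ → ℝ} {S : Set ℝ} (hf : ConvexOn ℝ S f) {s : ℝ}
    (hs : s ∈ interior S) : ∃ c, ∀ t ∈ S, 0 ≤ bregman f c s t := by
  refine ⟨derivWithin f (Ioi s) s, fun t ht => ?_⟩
  unfold bregman
  rcases lt_trichotomy t s with hts | rfl | hst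
  · have hslope := (hf.slope_le_leftDeriv_of_mem_interior ht hs hts).trans
      (hf.leftDeriv_le_rightDeriv_of_mem_interior hs)
    rw [slope_def_field, div_le_iff₀ (sub_pos.2 hts)] at hslope
    linarith
  · simp
  · have hslope := hf.rightDeriv_le_slope_of_mem_interior hs ht hst
    rw [slope_def_field, le_div_iff₀ (sub_pos.2 hst)] at hslope
    linarith

lemma bregman_le_secondDifference {f : ℝ → ℝ} {S : Set ℝ} (hf : ConvexOn ℝ S f) {c s r t : ℝ}
    (hnonneg : ∀ t ∈ S, 0 ≤ bregman f c s t) (hl : s - r ∈ S) (hr : s + r ∈ S)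
    (ht : |t - s| ≤ r) : bregman f c s t ≤ f (s + r) + f (s - r) - 2 * f s := by
  have hts : t ∈ Icc (s - r) (s + r) := by
    constructor <;> linarith [abs_le.1 ht]
  have hmax := (convexOn_bregman hf c s).le_max_of_mem_Icc hl hr hts
  calc bregman f c s t ≤ bregman f c s (s - r) + bregman f c s (s + r) :=
        hmax.trans (max_le_add_of_nonneg (hnonneg _ hl) (hnonneg _ hr))
    _ = f (s + r) + f (s - r) - 2 * f s := by unfold bregman; ring

lemma exists_pos_le_midpoint_gap {V : Type*} [NormedAddCommGroup V] [NormedSpace ℝ V] {S : Set V}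
    (hS : IsCompact S) {f : V → ℝ} (hf : StrictConvexOn ℝ S f) (hfc : ContinuousOn f S)
    {r : ℝ} (hr : 0 < r) :
    ∃ γ > 0, ∀ s ∈ S, ∀ t ∈ S, r ≤ dist s t → γ ≤ f s + f t - 2 * f (midpoint ℝ s t) := by
  set P : Set (V × V) := (S ×ˢ S) ∩ {p | r ≤ dist p.1 p.2}
  have hP : IsCompact P :=
    (hS.prod hS).inter_right (isClosed_le continuous_const continuous_dist)
  have hgap : ContinuousOn (fun p : V × V => f p.1 + f p.2 - 2 * f (midpoint ℝ p.1 p.2)) P := by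
    have hfst := hfc.comp continuousOn_fst fun p (hp : p ∈ P) => hp.1.1
    have hsnd := hfc.comp continuousOn_snd fun p (hp : p ∈ P) => hp.1.2
    have hmid := hfc.comp (f := fun p : V × V => midpoint ℝ p.1 p.2)
      (by simp only [midpoint_eq_smul_add]; fun_prop)
      fun p (hp : p ∈ P) => hf.1.midpoint_mem hp.1.1 hp.1.2
    exact (hfst.add hsnd).sub (hmid.const_smul (2 : ℝ))
  have hpos : ∀ p ∈ P, 0 < f p.1 + f p.2 - 2 * f (midpoint ℝ p.1 p.2) := by
    intro p hp
    have hne : p.1 ≠ p.2 := dist_pos.1 (hr.trans_le hp.2)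
    have hlt := hf.2 hp.1.1 hp.1.2 hne one_half_pos one_half_pos (add_halves 1)
    rw [midpoint_eq_smul_add, smul_add, invOf_eq_inv, ← one_div]
    simp only [smul_eq_mul] at hlt
    linarith
  obtain ⟨γ, hγ, hle⟩ := hP.exists_forall_le' hgap hpos
  exact ⟨γ, hγ, fun s hs t ht hst => hle (s, t) ⟨⟨hs, ht⟩, hst⟩⟩

lemma exists_pos_le_bregman {S : Set ℝ} (hS : IsCompact S) {f : ℝ → ℝ}
    (hf : StrictConvexOn ℝ S f) (hfc : ContinuousOn f S) {r : ℝ} (hr : 0 < r) :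
    ∃ γ > 0, ∀ c, ∀ s ∈ S, (∀ t ∈ S, 0 ≤ bregman f c s t) →
      ∀ t ∈ S, r ≤ |t - s| → γ ≤ bregman f c s t := by
  obtain ⟨γ, hγ, hgap⟩ := exists_pos_le_midpoint_gap hS hf hfc hr
  refine ⟨γ, hγ, fun c s hs hnonneg t ht hst => ?_⟩
  have hmid := hnonneg _ (hf.1.midpoint_mem hs ht)
  calc γ ≤ f s + f t - 2 * f (midpoint ℝ s t) := hgap s hs t ht (by rwa [dist_comm])
    _ = bregman f c s t - 2 * bregman f c s (midpoint ℝ s t) := by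
        rw [midpoint_eq_smul_add, smul_eq_mul, bregman, bregman, invOf_eq_inv]; ring
    _ ≤ bregman f c s t := by linarith

lemma mul_sq_le_bregman {f g : ℝ → ℝ} {S : Set ℝ} {c s r γ : ℝ}
    (hnonneg : ∀ t ∈ S, 0 ≤ bregman f c s t)
    (hgap : ∀ t ∈ S, r ≤ |t - s| → γ ≤ bregman f c s t) (hγ : 0 ≤ γ)
    (hg : ∀ t ∈ S, |g t| ≤ 1) (hsupp : ∀ t ∈ S, g t ≠ 0 → r ≤ |t - s|) :
    ∀ t ∈ S, γ * g t ^ 2 ≤ bregman f c s t := by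
  intro t ht
  rcases eq_or_ne (g t) 0 with h0 | h0
  · simpa [h0] using hnonneg t ht
  · have hsq : g t ^ 2 ≤ 1 := (sq_le_one_iff_abs_le_one _).2 (hg t ht)
    exact (mul_le_of_le_one_right hγ hsq).trans (hgap t ht (hsupp t ht h0))

/-- The `k`-th point of the grid that cuts `[a, b]` into `n + 1` equal intervals. -/
noncomputable def gridPoint (a b : ℝ) (n k : ℕ) : ℝ := a + k * ((b - a) / (n + 1))

/-- The partition of unity `φ` is localized at the points `s j` with radius `r`: on `K`, the
function `φ j` vanishes at distance more than `r` from `s j`. -/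
def HasMesh {J : Type*} {K : Set ℝ} (φ : PartitionOfUnity J ℝ K) (s : J → ℝ) (r : ℝ) : Prop :=
  ∀ j, ∀ t ∈ K, φ j t ≠ 0 → |t - s j| ≤ r

lemma HasMesh.abs_sub_sub_le {J : Type*} {K : Set ℝ} {φ : PartitionOfUnity J ℝ K} {s : J → ℝ}
    {r : ℝ} (hφ : HasMesh φ s r) {i j : J} {p q : ℝ} (hp : p ∈ K) (hq : q ∈ K)
    (hip : φ i p ≠ 0) (hjq : φ j q ≠ 0) : |s i - s j| - 2 * r ≤ |p - q| := by
  have hsi := abs_sub_comm p (s i) ▸ hφ i p hp hip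
  have hsj := hφ j q hq hjq
  linarith [abs_sub_le (s i) p (s j), abs_sub_le p q (s j)]

section Grid

variable (a b : ℝ) (n : ℕ)

lemma gridPoint_zero : gridPoint a b n 0 = a := by simp [gridPoint]

lemma gridPoint_last : gridPoint a b n (n + 1) = b := by
  unfold gridPoint
  push_cast
  field_simp
  ring

lemma gridPoint_succ (k : ℕ) :
    gridPoint a b n (k + 1) = gridPoint a b n k + (b - a) / (n + 1) := by
  unfold gridPoint
  push_cast
  ring

lemma gridPoint_sub (j k : ℕ) :
    gridPoint a b n j - gridPoint a b n k = (j - k) * ((b - a) / (n + 1)) := by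
  unfold gridPoint
  ring

variable {a b}

lemma gridPoint_strictMono (hab : a < b) : StrictMono (gridPoint a b n) :=
  strictMono_nat_of_lt_succ fun k => by
    rw [gridPoint_succ]
    exact lt_add_of_pos_right _ (div_pos (sub_pos.2 hab) n.cast_add_one_pos)

lemma gridPoint_mem_Icc (hab : a < b) {k : ℕ} (hk : k ≤ n + 1) :
    gridPoint a b n k ∈ Icc a b :=
  ⟨(gridPoint_zero a b n).ge.trans ((gridPoint_strictMono n hab).monotone k.zero_le),
    ((gridPoint_strictMono n hab).monotone hk).trans (gridPoint_last a b n).le⟩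

lemma gridPoint_mem_Ioo (hab : a < b) {k : ℕ} (hk : k < n) :
    gridPoint a b n (k + 1) ∈ Ioo a b :=
  ⟨(gridPoint_zero a b n).ge.trans_lt (gridPoint_strictMono n hab k.succ_pos),
    (gridPoint_strictMono n hab (Nat.succ_lt_succ hk)).trans_le (gridPoint_last a b n).le⟩

lemma card_filter_abs_gridPoint_sub_lt (hab : a < b) (i : Fin n) :
    (Finset.univ.filter fun j : Fin n =>
      |gridPoint a b n (i + 1) - gridPoint a b n (j + 1)| < 3 * ((b - a) / (n + 1))).card ≤ 5 := by
  have hw : 0 < (b - a) / (n + 1) := div_pos (sub_pos.2 hab) n.cast_add_one_pos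
  have hmaps : ∀ j ∈ Finset.univ.filter fun j : Fin n =>
      |gridPoint a b n (i + 1) - gridPoint a b n (j + 1)| < 3 * ((b - a) / (n + 1)),
      (j : ℕ) ∈ Finset.Icc (i - 2 : ℕ) (i + 2) := by
    intro j hj
    rw [Finset.mem_filter_univ, gridPoint_sub, abs_mul, abs_of_pos hw,
      mul_lt_mul_iff_left₀ hw] at hj
    have hij : |(i : ℤ) - j| < 3 := by
      exact_mod_cast (by push_cast at hj ⊢; simpa using hj : |((i : ℤ) : ℝ) - (j : ℤ)| < (3 : ℤ))
    rw [Finset.mem_Icc]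
    rw [abs_lt] at hij
    omega
  calc _ ≤ (Finset.Icc (i - 2 : ℕ) (i + 2)).card :=
        Finset.card_le_card_of_injOn _ hmaps Fin.val_injective.injOn
    _ ≤ 5 := by rw [Nat.card_Icc]; omega

lemma exists_lt_gridPoint_add_two (hab : a < b) (hn : 0 < n) {t : ℝ} (ht : t ∈ Icc a b) :
    ∃ k : Fin n, (gridPoint a b n k < t ∨ (k : ℕ) = 0) ∧
      (t < gridPoint a b n (k + 2) ∨ (k : ℕ) + 1 = n) := by
  have hw : 0 < (b - a) / (n + 1) := div_pos (sub_pos.2 hab) n.cast_add_one_pos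
  have hmono := gridPoint_strictMono n hab
  obtain ⟨m, hle, hlt⟩ : ∃ m, gridPoint a b n m ≤ t ∧ t < gridPoint a b n (m + 1) := by
    have hle := Nat.floor_le (div_nonneg (sub_nonneg.2 ht.1) hw.le)
    have hlt := Nat.lt_floor_add_one ((t - a) / ((b - a) / (n + 1)))
    rw [le_div_iff₀ hw] at hle
    rw [div_lt_iff₀ hw] at hlt
    refine ⟨_, le_sub_iff_add_le'.1 hle, ?_⟩
    unfold gridPoint
    push_cast
    linarith
  refine ⟨⟨min (m - 1) (n - 1), by omega⟩, ?_, ?_⟩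
  · rcases Nat.eq_zero_or_pos (min (m - 1) (n - 1)) with h0 | hpos
    · exact .inr h0
    · exact .inl ((hmono (by dsimp only; omega)).trans_le hle)
  · rcases le_or_gt n m with hnm | hmn
    · exact .inr (by dsimp only; omega)
    · exact .inl (hlt.trans_le (hmono.monotone (by dsimp only; omega)))

lemma exists_partitionOfUnity_hasMesh (hab : a < b) (hn : 0 < n) :
    ∃ φ : PartitionOfUnity (Fin n) ℝ (Icc a b),
      HasMesh φ (fun k => gridPoint a b n (k + 1)) ((b - a) / (n + 1)) := by
  obtain ⟨φ, hφ⟩ := PartitionOfUnity.exists_isSubordinate isClosed_Icc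
    (fun k : Fin n => {t | (gridPoint a b n k < t ∨ (k : ℕ) = 0) ∧
      (t < gridPoint a b n (k + 2) ∨ (k : ℕ) + 1 = n)})
    (fun k => ((isOpen_lt continuous_const continuous_id).union isOpen_const).inter
      ((isOpen_lt continuous_id continuous_const).union isOpen_const))
    (fun t ht => mem_iUnion.2 (exists_lt_gridPoint_add_two n hab hn ht))
  refine ⟨φ, fun k t ht hne => ?_⟩
  obtain ⟨hl, hr⟩ := hφ k (subset_tsupport _ hne)
  have hl' : gridPoint a b n k ≤ t := by
    rcases hl with hl | hk
    · exact hl.le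
    · rw [hk, gridPoint_zero]; exact ht.1
  have hr' : t ≤ gridPoint a b n (k + 2) := by
    rcases hr with hr | hk
    · exact hr.le
    · rw [show (k : ℕ) + 2 = n + 1 by omega, gridPoint_last]; exact ht.2
  rw [gridPoint_succ] at hr'
  rw [abs_sub_le_iff]
  constructor <;> linarith [gridPoint_succ a b n k]

lemma sum_secondDifference_gridPoint (f : ℝ → ℝ) :
    ∑ k : Fin n, (f (gridPoint a b n (k + 2)) + f (gridPoint a b n k)
        - 2 * f (gridPoint a b n (k + 1))) =
      (f b - f (gridPoint a b n n)) - (f (gridPoint a b n 1) - f a) := by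
  have htel := Finset.sum_range_sub
    (fun k => f (gridPoint a b n (k + 1)) - f (gridPoint a b n k)) n
  rw [gridPoint_last, zero_add, gridPoint_zero] at htel
  rw [← htel, Fin.sum_univ_eq_sum_range (fun k => f (gridPoint a b n (k + 2)) +
    f (gridPoint a b n k) - 2 * f (gridPoint a b n (k + 1)))]
  exact Finset.sum_congr rfl fun k _ => by ring

lemma tendsto_const_div_add_one (C : ℝ) :
    Tendsto (fun n : ℕ => C / ((n : ℝ) + 1)) atTop (𝓝 0) :=
  tendsto_const_nhds.div_atTop
    (tendsto_natCast_atTop_atTop.atTop_add tendsto_const_nhds)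

lemma tendsto_sum_secondDifference_gridPoint (hab : a < b) {f : ℝ → ℝ}
    (hf : ContinuousOn f (Icc a b)) :
    Tendsto (fun n : ℕ => ∑ k : Fin n, (f (gridPoint a b n (k + 2)) + f (gridPoint a b n k)
        - 2 * f (gridPoint a b n (k + 1)))) atTop (𝓝 0) := by
  have hstep := tendsto_const_div_add_one (b - a)
  have hfirst : Tendsto (fun n => gridPoint a b n 1) atTop (𝓝[Icc a b] a) := by
    refine tendsto_nhdsWithin_iff.2 ⟨?_, .of_forall fun n => gridPoint_mem_Icc n hab (by omega)⟩
    simpa [gridPoint] using hstep.const_add a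
  have hlast : Tendsto (fun n => gridPoint a b n n) atTop (𝓝[Icc a b] b) := by
    refine tendsto_nhdsWithin_iff.2 ⟨?_, .of_forall fun n => gridPoint_mem_Icc n hab (by omega)⟩
    have heq (n : ℕ) : gridPoint a b n n = b - (b - a) / (n + 1) := by
      linarith [gridPoint_succ a b n n, gridPoint_last a b n]
    simpa only [heq, sub_zero] using hstep.const_sub b
  have ha := (hf a (left_mem_Icc.2 hab.le)).tendsto.comp hfirst
  have hb := (hf b (right_mem_Icc.2 hab.le)).tendsto.comp hlast
  simp only [sum_secondDifference_gridPoint]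
  simpa using (hb.const_sub (f b)).sub (ha.sub_const (f a))

end Grid

lemma exists_partitionOfUnity_sum_bregman_le {a b : ℝ} (hab : a < b) {f : ℝ → ℝ}
    (hf : ConvexOn ℝ (Icc a b) f) (hfc : ContinuousOn f (Icc a b)) {r η : ℝ} (hr : 0 < r)
    (hη : 0 < η) :
    ∃ (n : ℕ) (φ : PartitionOfUnity (Fin n) ℝ (Icc a b)) (s c e : Fin n → ℝ),
      0 < n ∧ HasMesh φ s r ∧ (∀ k, s k ∈ Icc a b) ∧
      (∀ k, ∀ t ∈ Icc a b, 0 ≤ bregman f (c k) (s k) t) ∧ (∀ k, 0 ≤ e k) ∧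
      (∀ k, ∀ t ∈ Icc a b, φ k t ≠ 0 → bregman f (c k) (s k) t ≤ e k) ∧ ∑ k, e k ≤ η := by
  have hsum := (tendsto_sum_secondDifference_gridPoint hab hfc).eventually_le_const hη
  have hmesh := (tendsto_const_div_add_one (b - a)).eventually_lt_const hr
  obtain ⟨n, hsum, hnr, hn⟩ := (hsum.and (hmesh.and (eventually_gt_atTop (0 : ℕ)))).exists
  obtain ⟨φ, hφ⟩ := exists_partitionOfUnity_hasMesh n hab hn
  have hmem (k : Fin n) := gridPoint_mem_Ioo n hab k.2
  choose c hc using fun k : Fin n => exists_bregman_nonneg hf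
    (mem_interior_iff_mem_nhds.2 (Icc_mem_nhds (hmem k).1 (hmem k).2))
  have hbound (k : Fin n) (t : ℝ) (ht : |t - gridPoint a b n (k + 1)| ≤ (b - a) / (n + 1)) :
      bregman f (c k) (gridPoint a b n (k + 1)) t ≤ f (gridPoint a b n (k + 2)) +
        f (gridPoint a b n k) - 2 * f (gridPoint a b n (k + 1)) := by
    have hright := gridPoint_succ a b n (k + 1)
    have hleft := eq_sub_of_add_eq (gridPoint_succ a b n k).symm
    rw [hright, hleft]
    apply bregman_le_secondDifference hf (hc k) _ _ ht
    · rw [← hleft]; exact gridPoint_mem_Icc n hab (by omega)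
    · rw [← hright]; exact gridPoint_mem_Icc n hab (by omega)
  refine ⟨n, φ, _, c, _, hn, fun k t ht hne => (hφ k t ht hne).trans hnr.le,
    fun k => Ioo_subset_Icc_self (hmem k), hc, fun k => ?_,
    fun k t ht hne => hbound k t (hφ k t ht hne), hsum⟩
  refine (hc k _ (Ioo_subset_Icc_self (hmem k))).trans (hbound k _ ?_)
  rw [sub_self, abs_zero]
  exact div_nonneg (sub_nonneg.2 hab.le) n.cast_add_one_pos.le

end Scalar

section FunctionalCalculus

variable {E F : Type*} [NormedAddCommGroup E] [InnerProductSpace ℂ E] [CompleteSpace E]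
  [NormedAddCommGroup F] [InnerProductSpace ℂ F] [CompleteSpace F]
  {H : E →L[ℂ] E} {A : F →L[ℂ] F} {K : Set ℝ} {I J : Type*} [Fintype I] [Fintype J]

lemma re_inner_cfc_le_re_inner_cfc (hs : spectrum ℝ H ⊆ K) {p q : ℝ → ℝ}
    (hp : ContinuousOn p K) (hq : ContinuousOn q K) (hpq : ∀ t ∈ K, p t ≤ q t) (x : E) :
    (⟪cfc p H x, x⟫_ℂ).re ≤ (⟪cfc q H x, x⟫_ℂ).re := by
  have hle : cfc p H ≤ cfc q H := cfc_mono (fun t ht => hpq t (hs ht)) (hp.mono hs) (hq.mono hs)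
  have hnonneg := ((ContinuousLinearMap.le_def _ _).1 hle).re_inner_nonneg_left x
  rw [sub_apply, inner_sub_left, map_sub] at hnonneg
  exact sub_nonneg.1 hnonneg

lemma cfc_mul_apply (hs : spectrum ℝ H ⊆ K) {p q : ℝ → ℝ} (hp : ContinuousOn p K)
    (hq : ContinuousOn q K) (x : E) :
    cfc (fun t => p t * q t) H x = cfc p H (cfc q H x) := by
  rw [cfc_mul p q H (hp.mono hs) (hq.mono hs)]
  rfl

lemma inner_cfc_left (p : ℝ → ℝ) (x y : E) : ⟪cfc p H x, y⟫_ℂ = ⟪x, cfc p H y⟫_ℂ :=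
  (cfc_predicate p H : IsSelfAdjoint _).isSymmetric x y

lemma norm_cfc_apply_sq (hs : spectrum ℝ H ⊆ K) {p : ℝ → ℝ} (hp : ContinuousOn p K) (x : E) :
    ‖cfc p H x‖ ^ 2 = (⟪cfc (fun t => p t ^ 2) H x, x⟫_ℂ).re := by
  simp only [sq (p _)]
  rw [cfc_mul_apply hs hp hp, inner_cfc_left]
  exact norm_sq_eq_re_inner (𝕜 := ℂ) _

lemma re_inner_cfc_apply_cfc_apply_le (hs : spectrum ℝ H ⊆ K) {q ρ : ℝ → ℝ}
    (hq : ContinuousOn q K) (hρ : ContinuousOn ρ K) {e : ℝ}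
    (hqe : ∀ t ∈ K, ρ t ≠ 0 → q t ≤ e) (x : E) :
    (⟪cfc q H (cfc ρ H x), cfc ρ H x⟫_ℂ).re ≤ e * ‖cfc ρ H x‖ ^ 2 := by
  have hρq : ContinuousOn (fun t => ρ t * q t) K := hρ.mul hq
  have hle : ∀ t ∈ K, ρ t * q t * ρ t ≤ e * ρ t ^ 2 := by
    intro t ht
    rcases eq_or_ne (ρ t) 0 with h0 | h0
    · simp [h0]
    · nlinarith [hqe t ht h0, sq_nonneg (ρ t)]
  calc (⟪cfc q H (cfc ρ H x), cfc ρ H x⟫_ℂ).re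
      = (⟪cfc (fun t => ρ t * q t * ρ t) H x, x⟫_ℂ).re := by
        rw [cfc_mul_apply hs hρq hρ, cfc_mul_apply hs hρ hq, inner_cfc_left (p := ρ)]
    _ ≤ (⟪cfc (fun t => e * ρ t ^ 2) H x, x⟫_ℂ).re :=
        re_inner_cfc_le_re_inner_cfc hs (hρq.mul hρ) ((hρ.pow 2).const_mul e) hle x
    _ = e * ‖cfc ρ H x‖ ^ 2 := by
        rw [cfc_const_mul e (fun t => ρ t ^ 2) H ((hρ.pow 2).mono hs), norm_cfc_apply_sq hs hρ]
        simp

lemma sum_cfc_partitionOfUnity (hH : IsSelfAdjoint H) (hs : spectrum ℝ H ⊆ K)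
    (φ : PartitionOfUnity J ℝ K) : ∑ j, cfc (φ j) H = 1 := by
  rw [← cfc_sum_univ (fun j => φ j) H fun j => (φ j).continuous.continuousOn, ← cfc_one ℝ H]
  refine cfc_congr fun t ht => ?_
  rw [Finset.sum_apply, ← finsum_eq_sum_of_fintype, φ.sum_eq_one (hs ht), Pi.one_apply]

lemma sum_norm_cfc_apply_sq_le (hH : IsSelfAdjoint H) (hs : spectrum ℝ H ⊆ K)
    (φ : PartitionOfUnity J ℝ K) (x : E) : ∑ j, ‖cfc (φ j) H x‖ ^ 2 ≤ ‖x‖ ^ 2 := by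
  have hle (j : J) : ‖cfc (φ j) H x‖ ^ 2 ≤ (⟪cfc (φ j) H x, x⟫_ℂ).re := by
    have hφ : ContinuousOn (φ j) K := (φ j).continuous.continuousOn
    rw [norm_cfc_apply_sq hs hφ]
    exact re_inner_cfc_le_re_inner_cfc hs (hφ.pow 2) hφ
      (fun t _ => pow_le_of_le_one (φ.nonneg j t) (φ.le_one j t) two_ne_zero) x
  calc ∑ j, ‖cfc (φ j) H x‖ ^ 2 ≤ ∑ j, (⟪cfc (φ j) H x, x⟫_ℂ).re :=
        Finset.sum_le_sum fun j _ => hle j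
    _ = (⟪(∑ j, cfc (φ j) H) x, x⟫_ℂ).re := by
        rw [sum_apply, sum_inner, Complex.re_sum]
    _ = ‖x‖ ^ 2 := by
        rw [sum_cfc_partitionOfUnity hH hs φ]
        exact (norm_sq_eq_re_inner (𝕜 := ℂ) x).symm

lemma norm_sub_sum_smul_cfc_le (hH : IsSelfAdjoint H) (hs : spectrum ℝ H ⊆ K)
    {φ : PartitionOfUnity J ℝ K} {s : J → ℝ} {r : ℝ} (hr : 0 ≤ r) (hφ : HasMesh φ s r) :
    ‖H - ∑ j, s j • cfc (φ j) H‖ ≤ r := by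
  have hcont (j : J) : ContinuousOn (fun t => s j • φ j t) (spectrum ℝ H) := by fun_prop
  have hcfc : H - ∑ j, s j • cfc (φ j) H = cfc (fun t => t - ∑ j, s j • φ j t) H := by
    rw [cfc_sub (fun t => t) _ H (by fun_prop) (by fun_prop), cfc_id' ℝ H]
    have hsum := cfc_sum_univ (fun j t => s j • φ j t) H hcont
    simp only [Finset.sum_fn] at hsum
    rw [hsum]
    congr 2 with j : 1
    exact (cfc_smul (s j) (φ j) H).symm
  rw [hcfc]
  refine norm_cfc_le hr fun t ht => ?_
  have hone : ∑ j, φ j t = 1 := by rw [← finsum_eq_sum_of_fintype, φ.sum_eq_one (hs ht)]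
  calc ‖t - ∑ j, s j • φ j t‖ = ‖∑ j, φ j t * (t - s j)‖ := by
        simp only [mul_sub, Finset.sum_sub_distrib, ← Finset.sum_mul, hone, one_mul, smul_eq_mul,
          mul_comm (s _)]
    _ ≤ ∑ j, φ j t * r := norm_sum_le_of_le _ fun j _ => by
        rw [norm_mul, Real.norm_of_nonneg (φ.nonneg j t)]
        rcases eq_or_ne (φ j t) 0 with h0 | h0
        · simp [h0]
        · exact mul_le_mul_of_nonneg_left (hφ j t (hs ht) h0) (φ.nonneg j t)
    _ = r := by rw [← Finset.sum_mul, hone, one_mul]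

/-- Schur's test. -/
lemma sum_abs_mul_mul_le {c : I → J → ℝ} {C : ℝ} (hrow : ∀ i, ∑ j, |c i j| ≤ C)
    (hcol : ∀ j, ∑ i, |c i j| ≤ C) (p : I → ℝ) (q : J → ℝ) :
    ∑ i, ∑ j, |c i j| * (p i * q j) ≤ C * ((∑ i, p i ^ 2 + ∑ j, q j ^ 2) / 2) := by
  have hp : ∑ i, ∑ j, |c i j| * p i ^ 2 ≤ C * ∑ i, p i ^ 2 := by
    simp only [← Finset.sum_mul, Finset.mul_sum]
    exact Finset.sum_le_sum fun i _ => mul_le_mul_of_nonneg_right (hrow i) (sq_nonneg _)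
  have hq : ∑ i, ∑ j, |c i j| * q j ^ 2 ≤ C * ∑ j, q j ^ 2 := by
    rw [Finset.sum_comm]
    simp only [← Finset.sum_mul, Finset.mul_sum]
    exact Finset.sum_le_sum fun j _ => mul_le_mul_of_nonneg_right (hcol j) (sq_nonneg _)
  calc ∑ i, ∑ j, |c i j| * (p i * q j)
      ≤ ∑ i, ∑ j, (|c i j| * p i ^ 2 + |c i j| * q j ^ 2) / 2 := by
        gcongr with i _ j _
        nlinarith [mul_nonneg (abs_nonneg (c i j)) (sq_nonneg (p i - q j))]
    _ = (∑ i, ∑ j, |c i j| * p i ^ 2 + ∑ i, ∑ j, |c i j| * q j ^ 2) / 2 := by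
        simp only [← Finset.sum_div, Finset.sum_add_distrib]
    _ ≤ C * ((∑ i, p i ^ 2 + ∑ j, q j ^ 2) / 2) := by linarith

lemma norm_sum_smul_cfc_comp_cfc_le (hH : IsSelfAdjoint H) (hHs : spectrum ℝ H ⊆ K)
    (hA : IsSelfAdjoint A) (hAs : spectrum ℝ A ⊆ K) (W : F →L[ℂ] E)
    (φ : PartitionOfUnity I ℝ K) (ψ : PartitionOfUnity J ℝ K) {c : I → J → ℝ} {C : ℝ}
    (hC : 0 ≤ C) (hrow : ∀ i, ∑ j, |c i j| ≤ C) (hcol : ∀ j, ∑ i, |c i j| ≤ C) :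
    ‖∑ i, ∑ j, c i j • (cfc (φ i) H ∘L W ∘L cfc (ψ j) A)‖ ≤ C * ‖W‖ := by
  refine opNorm_le_of_re_inner_le (by positivity) fun x y hx hy => ?_
  have hterm (i : I) (j : J) :
      (⟪(c i j • (cfc (φ i) H ∘L W ∘L cfc (ψ j) A)) x, y⟫_ℂ).re ≤
        ‖W‖ * (|c i j| * (‖cfc (φ i) H y‖ * ‖cfc (ψ j) A x‖)) := by
    calc (⟪(c i j • (cfc (φ i) H ∘L W ∘L cfc (ψ j) A)) x, y⟫_ℂ).re
        ≤ ‖⟪(c i j • (cfc (φ i) H ∘L W ∘L cfc (ψ j) A)) x, y⟫_ℂ‖ := Complex.re_le_norm _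
      _ = |c i j| * ‖⟪W (cfc (ψ j) A x), cfc (φ i) H y⟫_ℂ‖ := by
        rw [smul_apply, ← Complex.coe_smul, inner_smul_left, norm_mul, comp_apply, comp_apply,
          inner_cfc_left]
        simp
      _ ≤ |c i j| * (‖W‖ * ‖cfc (ψ j) A x‖ * ‖cfc (φ i) H y‖) := by
        gcongr
        exact (norm_inner_le_norm _ _).trans (by gcongr; exact W.le_opNorm _)
      _ = ‖W‖ * (|c i j| * (‖cfc (φ i) H y‖ * ‖cfc (ψ j) A x‖)) := by ring
  calc (⟪(∑ i, ∑ j, c i j • (cfc (φ i) H ∘L W ∘L cfc (ψ j) A)) x, y⟫_ℂ).re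
      = ∑ i, ∑ j, (⟪(c i j • (cfc (φ i) H ∘L W ∘L cfc (ψ j) A)) x, y⟫_ℂ).re := by
        simp only [sum_apply, sum_inner, Complex.re_sum]
    _ ≤ ∑ i, ∑ j, ‖W‖ * (|c i j| * (‖cfc (φ i) H y‖ * ‖cfc (ψ j) A x‖)) := by
        gcongr with i _ j _
        exact hterm i j
    _ = ‖W‖ * ∑ i, ∑ j, |c i j| * (‖cfc (φ i) H y‖ * ‖cfc (ψ j) A x‖) := by
        simp only [Finset.mul_sum]
    _ ≤ ‖W‖ * (C * ((‖y‖ ^ 2 + ‖x‖ ^ 2) / 2)) := by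
        refine mul_le_mul_of_nonneg_left ((sum_abs_mul_mul_le hrow hcol _ _).trans ?_)
          (norm_nonneg W)
        gcongr
        · exact sum_norm_cfc_apply_sq_le hH hHs φ y
        · exact sum_norm_cfc_apply_sq_le hA hAs ψ x
    _ = C * ‖W‖ := by rw [hx, hy]; ring

lemma comp_sub_comp_eq_sum (hH : IsSelfAdjoint H) (hHs : spectrum ℝ H ⊆ K) (hA : IsSelfAdjoint A)
    (hAs : spectrum ℝ A ⊆ K) (W : F →L[ℂ] E) (φ : PartitionOfUnity J ℝ K) (s : J → ℝ) :
    (∑ j, s j • cfc (φ j) H) ∘L W - W ∘L (∑ j, s j • cfc (φ j) A) =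
      ∑ i, ∑ j, (s i - s j) • (cfc (φ i) H ∘L W ∘L cfc (φ j) A) := by
  have hleft : (∑ j, s j • cfc (φ j) H) ∘L W =
      ∑ i, ∑ j, s i • (cfc (φ i) H ∘L W ∘L cfc (φ j) A) := by
    simp only [← Finset.smul_sum, ← comp_finsetSum, sum_cfc_partitionOfUnity hA hAs φ]
    simp [finsetSum_comp, one_def]
  have hright : W ∘L (∑ j, s j • cfc (φ j) A) =
      ∑ i, ∑ j, s j • (cfc (φ i) H ∘L W ∘L cfc (φ j) A) := by
    rw [Finset.sum_comm]
    simp only [← Finset.smul_sum, ← finsetSum_comp, sum_cfc_partitionOfUnity hH hHs φ]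
    simp [comp_finsetSum, one_def]
  simp only [hleft, hright, sub_smul, Finset.sum_sub_distrib]

lemma norm_sum_sub_smul_cfc_comp_cfc_le (hH : IsSelfAdjoint H) (hHs : spectrum ℝ H ⊆ K)
    (hA : IsSelfAdjoint A) (hAs : spectrum ℝ A ⊆ K) (W : F →L[ℂ] E)
    (φ : PartitionOfUnity J ℝ K) {s : J → ℝ} {R D θ : ℝ} {m : ℕ} (hR : 0 ≤ R) (hθ : 0 ≤ θ)
    (hD : ∀ i j, |s i - s j| ≤ D)
    (hcard : ∀ i, (Finset.univ.filter fun j => |s i - s j| < R).card ≤ m)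
    (hfar : ∀ i j, R ≤ |s i - s j| → ‖cfc (φ i) H ∘L W ∘L cfc (φ j) A‖ ≤ θ) :
    ‖∑ i, ∑ j, (s i - s j) • (cfc (φ i) H ∘L W ∘L cfc (φ j) A)‖ ≤
      m * R * ‖W‖ + Fintype.card J ^ 2 * (D * θ) := by
  set near : J → J → ℝ := fun i j => if |s i - s j| < R then s i - s j else 0
  set far : J → J → ℝ := fun i j => if |s i - s j| < R then 0 else s i - s j
  have hsplit (i j : J) : s i - s j = near i j + far i j := by
    simp only [near, far]; split_ifs <;> ring
  have hrow (i : J) : ∑ j, |near i j| ≤ m * R := by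
    calc ∑ j, |near i j| = ∑ j with |s i - s j| < R, |s i - s j| := by
          simp only [near, Finset.sum_filter, apply_ite abs, abs_zero]
      _ ≤ (Finset.univ.filter fun j => |s i - s j| < R).card • R :=
          Finset.sum_le_card_nsmul _ _ _ fun j hj => (Finset.mem_filter.1 hj).2.le
      _ ≤ m * R := by
          rw [nsmul_eq_mul]
          gcongr
          exact hcard i
  have hcol (j : J) : ∑ i, |near i j| ≤ m * R := by
    refine (Finset.sum_congr rfl fun i _ => ?_).trans_le (hrow j)
    simp only [near, abs_sub_comm (s i), apply_ite abs]
  have hfar_term (i j : J) : ‖far i j • (cfc (φ i) H ∘L W ∘L cfc (φ j) A)‖ ≤ D * θ := by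
    have hD0 := (abs_nonneg _).trans (hD i j)
    rw [norm_smul, Real.norm_eq_abs]
    simp only [far]
    split_ifs with h
    · simpa using mul_nonneg hD0 hθ
    · exact mul_le_mul (hD i j) (hfar i j (not_lt.1 h)) (norm_nonneg _) hD0
  have hfar_sum : ‖∑ i, ∑ j, far i j • (cfc (φ i) H ∘L W ∘L cfc (φ j) A)‖ ≤
      Fintype.card J ^ 2 * (D * θ) := by
    calc _ ≤ ∑ _i : J, ∑ _j : J, D * θ :=
          norm_sum_le_of_le _ fun i _ => norm_sum_le_of_le _ fun j _ => hfar_term i j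
      _ = Fintype.card J ^ 2 * (D * θ) := by
          simp only [Finset.sum_const, Finset.card_univ, nsmul_eq_mul]; ring
  simp only [hsplit, add_smul, Finset.sum_add_distrib]
  exact norm_add_le_of_le (norm_sum_smul_cfc_comp_cfc_le hH hHs hA hAs W φ φ (by positivity)
    hrow hcol) hfar_sum

lemma norm_comp_sub_comp_le (hH : IsSelfAdjoint H) (hHs : spectrum ℝ H ⊆ K)
    (hA : IsSelfAdjoint A) (hAs : spectrum ℝ A ⊆ K) (W : F →L[ℂ] E)
    {φ : PartitionOfUnity J ℝ K} {s : J → ℝ} {r R D θ : ℝ} {m : ℕ} (hr : 0 ≤ r) (hR : 0 ≤ R)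
    (hθ : 0 ≤ θ) (hφ : HasMesh φ s r) (hD : ∀ i j, |s i - s j| ≤ D)
    (hcard : ∀ i, (Finset.univ.filter fun j => |s i - s j| < R).card ≤ m)
    (hfar : ∀ i j, R ≤ |s i - s j| → ‖cfc (φ i) H ∘L W ∘L cfc (φ j) A‖ ≤ θ) :
    ‖H ∘L W - W ∘L A‖ ≤ (2 * r + m * R) * ‖W‖ + Fintype.card J ^ 2 * (D * θ) := by
  set H' := ∑ j, s j • cfc (φ j) H
  set A' := ∑ j, s j • cfc (φ j) A
  have hH' : ‖(H - H') ∘L W‖ ≤ r * ‖W‖ := by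
    grw [opNorm_comp_le, norm_sub_sum_smul_cfc_le hH hHs hr hφ]
  have hA' : ‖W ∘L (A - A')‖ ≤ ‖W‖ * r := by
    grw [opNorm_comp_le, norm_sub_sum_smul_cfc_le hA hAs hr hφ]
  have hstep : ‖H' ∘L W - W ∘L A'‖ ≤ m * R * ‖W‖ + Fintype.card J ^ 2 * (D * θ) := by
    rw [comp_sub_comp_eq_sum hH hHs hA hAs]
    exact norm_sum_sub_smul_cfc_comp_cfc_le hH hHs hA hAs W φ hR hθ hD hcard hfar
  calc ‖H ∘L W - W ∘L A‖ = ‖(H - H') ∘L W - W ∘L (A - A') + (H' ∘L W - W ∘L A')‖ := by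
        rw [sub_comp, comp_sub]; congr 1; abel
    _ ≤ ‖(H - H') ∘L W‖ + ‖W ∘L (A - A')‖ + ‖H' ∘L W - W ∘L A'‖ :=
        norm_add_le_of_le (norm_sub_le _ _) le_rfl
    _ ≤ (2 * r + m * R) * ‖W‖ + Fintype.card J ^ 2 * (D * θ) := by linarith

end FunctionalCalculus

section Compression

open Set

variable {E F : Type*} [NormedAddCommGroup E] [InnerProductSpace ℂ E] [CompleteSpace E]
  [NormedAddCommGroup F] [InnerProductSpace ℂ F] [CompleteSpace F]

/-- The compression `ι* T ι` of an operator `T` along `ι`. When `ι` is isometric this is the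
compression to the range of `ι`, transported to the domain of `ι`. -/
noncomputable def compression (ι : F →L[ℂ] E) (T : E →L[ℂ] E) : F →L[ℂ] F := adjoint ι ∘L T ∘L ι

/-- The defect `f(ι* H ι) - ι* f(H) ι` in Jensen's operator inequality, for a scalar function `f`
that need not be operator convex. -/
noncomputable def jensenDefect (f : ℝ → ℝ) (ι : F →L[ℂ] E) (H : E →L[ℂ] E) : F →L[ℂ] F :=
  cfc f (compression ι H) - compression ι (cfc f H)

variable {ι : F →L[ℂ] E} {H : E →L[ℂ] E} {K : Set ℝ} {J : Type*} [Fintype J]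

lemma norm_le_one_of_adjoint_comp_self (hι : adjoint ι ∘L ι = 1) : ‖ι‖ ≤ 1 :=
  ι.opNorm_le_bound zero_le_one fun x => by
    rw [(norm_map_iff_adjoint_comp_self ι).2 hι, one_mul]

lemma isSelfAdjoint_compression (hH : IsSelfAdjoint H) (ι : F →L[ℂ] E) :
    IsSelfAdjoint (compression ι H) :=
  hH.adjoint_conj ι

lemma compression_algebraMap (hι : adjoint ι ∘L ι = 1) (r : ℝ) :
    compression ι (algebraMap ℝ _ r) = algebraMap ℝ _ r := by
  simp only [compression, Algebra.algebraMap_eq_smul_one, one_def, smul_comp, comp_smul, id_comp]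
  rw [hι, one_def]

lemma compression_mono {S T : E →L[ℂ] E} (hST : S ≤ T) : compression ι S ≤ compression ι T := by
  rw [ContinuousLinearMap.le_def] at hST ⊢
  have hpos := hST.adjoint_conj ι
  rwa [sub_comp, comp_sub] at hpos

lemma spectrum_compression_subset_Icc (hι : adjoint ι ∘L ι = 1) (hH : IsSelfAdjoint H) {a b : ℝ}
    (hs : spectrum ℝ H ⊆ Icc a b) : spectrum ℝ (compression ι H) ⊆ Icc a b := by
  have hA : IsSelfAdjoint (compression ι H) := isSelfAdjoint_compression hH ι
  have hlow : algebraMap ℝ _ a ≤ H :=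
    (algebraMap_le_iff_le_spectrum hH).2 fun t ht => (hs ht).1
  have hupp : H ≤ algebraMap ℝ _ b :=
    (le_algebraMap_iff_spectrum_le hH).2 fun t ht => (hs ht).2
  have hlow' := (compression_algebraMap hι a).symm.trans_le (compression_mono hlow)
  have hupp' := (compression_mono hupp).trans_eq (compression_algebraMap hι b)
  exact fun t ht => ⟨(algebraMap_le_iff_le_spectrum hA).1 hlow' t ht,
    (le_algebraMap_iff_spectrum_le hA).1 hupp' t ht⟩

lemma cfc_bregman (hH : IsSelfAdjoint H) (hs : spectrum ℝ H ⊆ K) {f : ℝ → ℝ}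
    (hf : ContinuousOn f K) (c s : ℝ) :
    cfc (bregman f c s) H = cfc f H - c • H + algebraMap ℝ _ (c * s - f s) := by
  have hfH := hf.mono hs
  have heq : bregman f c s = fun t => f t - c * t + (c * s - f s) := by
    ext t; unfold bregman; ring
  rw [heq, cfc_add_const (c * s - f s) (fun t => f t - c * t) H (by fun_prop),
    cfc_sub f (fun t => c * t) H hfH (by fun_prop), cfc_const_mul_id c H]

lemma jensenDefect_bregman (hι : adjoint ι ∘L ι = 1) (hH : IsSelfAdjoint H)
    (hHs : spectrum ℝ H ⊆ K) (hAs : spectrum ℝ (compression ι H) ⊆ K) {f : ℝ → ℝ}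
    (hf : ContinuousOn f K) (c s : ℝ) :
    jensenDefect (bregman f c s) ι H = jensenDefect f ι H := by
  have hconst := compression_algebraMap hι (c * s - f s)
  have hadd (S T : E →L[ℂ] E) : compression ι (S + T) = compression ι S + compression ι T := by
    simp [compression, add_comp, comp_add]
  have hsub (S : E →L[ℂ] E) :
      compression ι (S - c • H) = compression ι S - c • compression ι H := by
    simp [compression, sub_comp, comp_sub]
  rw [jensenDefect, jensenDefect, cfc_bregman hH hHs hf,
    cfc_bregman (isSelfAdjoint_compression hH ι) hAs hf, hadd, hsub, hconst]
  abel

lemma re_inner_cfc_comp_le (q : ℝ → ℝ) (x : F) :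
    (⟪cfc q H (ι x), ι x⟫_ℂ).re ≤
      (⟪cfc q (compression ι H) x, x⟫_ℂ).re + ‖jensenDefect q ι H‖ * ‖x‖ ^ 2 := by
  have hinner : ⟪cfc q H (ι x), ι x⟫_ℂ =
      ⟪cfc q (compression ι H) x, x⟫_ℂ - ⟪jensenDefect q ι H x, x⟫_ℂ := by
    rw [jensenDefect, sub_apply, inner_sub_left, sub_sub_cancel, compression, comp_apply,
      comp_apply, adjoint_inner_left]
  have hdefect : ‖⟪jensenDefect q ι H x, x⟫_ℂ‖ ≤ ‖jensenDefect q ι H‖ * ‖x‖ ^ 2 := by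
    grw [norm_inner_le_norm, le_opNorm, sq, mul_assoc]
  have hre := (abs_le.1 ((Complex.abs_re_le_norm _).trans hdefect)).1
  rw [hinner, Complex.sub_re]
  linarith

/-- Chebyshev's inequality for the spectral measure of `H` at the vector `ι ρ(ι* H ι) x`, whose
`q`-moment is controlled by its counterpart for `ι* H ι` and the defect. -/
lemma mul_norm_cfc_cfc_compression_apply_sq_le (hHs : spectrum ℝ H ⊆ K)
    (hAs : spectrum ℝ (compression ι H) ⊆ K) {q g ρ : ℝ → ℝ} (hq : ContinuousOn q K)
    (hg : ContinuousOn g K) (hρ : ContinuousOn ρ K) {γ e : ℝ}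
    (hgq : ∀ t ∈ K, γ * g t ^ 2 ≤ q t) (hqe : ∀ t ∈ K, ρ t ≠ 0 → q t ≤ e) (x : F) :
    γ * ‖cfc g H (ι (cfc ρ (compression ι H) x))‖ ^ 2 ≤
      (e + ‖jensenDefect q ι H‖) * ‖cfc ρ (compression ι H) x‖ ^ 2 := by
  set y := cfc ρ (compression ι H) x
  calc γ * ‖cfc g H (ι y)‖ ^ 2 = (⟪cfc (fun t => γ * g t ^ 2) H (ι y), ι y⟫_ℂ).re := by
        rw [cfc_const_mul γ (fun t => g t ^ 2) H ((hg.pow 2).mono hHs), norm_cfc_apply_sq hHs hg]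
        simp
    _ ≤ (⟪cfc q H (ι y), ι y⟫_ℂ).re :=
        re_inner_cfc_le_re_inner_cfc hHs ((hg.pow 2).const_mul γ) hq hgq _
    _ ≤ (⟪cfc q (compression ι H) y, y⟫_ℂ).re + ‖jensenDefect q ι H‖ * ‖y‖ ^ 2 :=
        re_inner_cfc_comp_le q y
    _ ≤ (e + ‖jensenDefect q ι H‖) * ‖y‖ ^ 2 := by
        rw [add_mul]
        gcongr
        exact re_inner_cfc_apply_cfc_apply_le hAs hq hρ hqe x

lemma mul_norm_sum_sq_le {V : Type*} [SeminormedAddCommGroup V] {v : J → V} {p q : J → ℝ} {γ : ℝ}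
    (hγ : 0 ≤ γ) (hp : ∀ j, 0 ≤ p j) (hq : ∀ j, 0 ≤ q j)
    (hv : ∀ j, γ * ‖v j‖ ^ 2 ≤ p j * q j) :
    γ * ‖∑ j, v j‖ ^ 2 ≤ (∑ j, p j) * ∑ j, q j := by
  calc γ * ‖∑ j, v j‖ ^ 2 ≤ γ * (∑ j, ‖v j‖) ^ 2 := by
        gcongr
        exact norm_sum_le _ _
    _ = (∑ j, √γ * ‖v j‖) ^ 2 := by rw [← Finset.mul_sum, mul_pow, Real.sq_sqrt hγ]
    _ ≤ (∑ j, p j) * ∑ j, q j :=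
        Finset.sum_sq_le_sum_mul_sum_of_sq_le_mul _ (fun j _ => hp j) (fun j _ => hq j)
          fun j _ => by rw [mul_pow, Real.sq_sqrt hγ]; exact hv j

lemma mul_norm_cfc_cfc_compression_apply_sq_le_sum (hH : IsSelfAdjoint H)
    (hHs : spectrum ℝ H ⊆ K) (hAs : spectrum ℝ (compression ι H) ⊆ K)
    (φ : PartitionOfUnity J ℝ K) {q : J → ℝ → ℝ} {g h : ℝ → ℝ} (hq : ∀ j, ContinuousOn (q j) K)
    (hg : ContinuousOn g K) (hh : ContinuousOn h K) {γ Δ : ℝ} {e : J → ℝ} (hγ : 0 ≤ γ)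
    (he : ∀ j, 0 ≤ e j) (hqe : ∀ j, ∀ t ∈ K, φ j t ≠ 0 → q j t ≤ e j)
    (hΔ : ∀ j, ‖jensenDefect (q j) ι H‖ ≤ Δ)
    (hgq : ∀ j, (∃ t ∈ K, φ j t * h t ≠ 0) → ∀ t ∈ K, γ * g t ^ 2 ≤ q j t) (x : F) :
    γ * ‖cfc g H (ι (cfc h (compression ι H) x))‖ ^ 2 ≤
      (∑ j, (e j + Δ)) * ‖cfc h (compression ι H) x‖ ^ 2 := by
  have hA : IsSelfAdjoint (compression ι H) := isSelfAdjoint_compression hH ι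
  set A := compression ι H
  set y := cfc h A x
  have hφ (j : J) : ContinuousOn (φ j) K := (φ j).continuous.continuousOn
  have hcoeff (j : J) : 0 ≤ e j + Δ := add_nonneg (he j) ((norm_nonneg _).trans (hΔ j))
  have hpiece (j : J) :
      γ * ‖cfc g H (ι (cfc (φ j) A y))‖ ^ 2 ≤ (e j + Δ) * ‖cfc (φ j) A y‖ ^ 2 := by
    by_cases hj : ∃ t ∈ K, φ j t * h t ≠ 0
    · grw [mul_norm_cfc_cfc_compression_apply_sq_le hHs hAs (hq j) hg (hφ j) (hgq j hj) (hqe j),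
        hΔ j]
    · push Not at hj
      have hzero : cfc (φ j) A y = 0 := by
        rw [← cfc_mul_apply hAs (hφ j) hh, cfc_congr fun t ht => hj t (hAs ht), cfc_const_zero,
          zero_apply]
      simp [hzero]
  have hsum : cfc g H (ι y) = ∑ j, cfc g H (ι (cfc (φ j) A y)) := by
    rw [← map_sum, ← map_sum, ← sum_apply, sum_cfc_partitionOfUnity hA hAs φ, one_def, id_apply]
  calc γ * ‖cfc g H (ι y)‖ ^ 2 ≤ (∑ j, (e j + Δ)) * ∑ j, ‖cfc (φ j) A y‖ ^ 2 := by
        rw [hsum]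
        exact mul_norm_sum_sq_le hγ hcoeff (fun j => sq_nonneg _) hpiece
    _ ≤ (∑ j, (e j + Δ)) * ‖y‖ ^ 2 :=
        mul_le_mul_of_nonneg_left (sum_norm_cfc_apply_sq_le hA hAs φ y)
          (Finset.sum_nonneg fun j _ => hcoeff j)

lemma norm_cfc_comp_cfc_compression_le (hH : IsSelfAdjoint H) (hHs : spectrum ℝ H ⊆ K)
    (hAs : spectrum ℝ (compression ι H) ⊆ K) (φ : PartitionOfUnity J ℝ K) {q : J → ℝ → ℝ}
    {g h : ℝ → ℝ} (hq : ∀ j, ContinuousOn (q j) K) (hg : ContinuousOn g K)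
    (hh : ContinuousOn h K) (hh_one : ∀ t ∈ K, |h t| ≤ 1) {γ Δ θ : ℝ} {e : J → ℝ} (hγ : 0 < γ)
    (hθ : 0 ≤ θ) (he : ∀ j, 0 ≤ e j) (hqe : ∀ j, ∀ t ∈ K, φ j t ≠ 0 → q j t ≤ e j)
    (hΔ : ∀ j, ‖jensenDefect (q j) ι H‖ ≤ Δ)
    (hgq : ∀ j, (∃ t ∈ K, φ j t * h t ≠ 0) → ∀ t ∈ K, γ * g t ^ 2 ≤ q j t)
    (hsum : ∑ j, (e j + Δ) ≤ γ * θ ^ 2) :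
    ‖cfc g H ∘L ι ∘L cfc h (compression ι H)‖ ≤ θ := by
  refine opNorm_le_bound _ hθ fun x => ?_
  have hx : ‖cfc h (compression ι H) x‖ ≤ ‖x‖ := by
    grw [le_opNorm, norm_cfc_le zero_le_one fun t ht => hh_one t (hAs ht), one_mul]
  refine le_of_sq_le_sq (le_of_mul_le_mul_left ?_ hγ) (by positivity)
  calc γ * ‖cfc g H (ι (cfc h (compression ι H) x))‖ ^ 2
      ≤ (∑ j, (e j + Δ)) * ‖cfc h (compression ι H) x‖ ^ 2 :=
        mul_norm_cfc_cfc_compression_apply_sq_le_sum hH hHs hAs φ hq hg hh hγ.le he hqe hΔ hgq x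
    _ ≤ γ * θ ^ 2 * ‖x‖ ^ 2 := by gcongr
    _ = γ * (θ * ‖x‖) ^ 2 := by ring

lemma norm_commutator_le_two_mul (hι : adjoint ι ∘L ι = 1) (hH : IsSelfAdjoint H) :
    ‖(ι ∘L adjoint ι) ∘L H - H ∘L (ι ∘L adjoint ι)‖ ≤ 2 * ‖H ∘L ι - ι ∘L compression ι H‖ := by
  have hA : IsSelfAdjoint (compression ι H) := isSelfAdjoint_compression hH ι
  set T := H ∘L ι - ι ∘L compression ι H
  have hT : adjoint T = adjoint ι ∘L H - compression ι H ∘L adjoint ι := by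
    rw [map_sub, adjoint_comp, adjoint_comp, hH.adjoint_eq, hA.adjoint_eq]
  have hcomm : (ι ∘L adjoint ι) ∘L H - H ∘L (ι ∘L adjoint ι) =
      ι ∘L adjoint T - T ∘L adjoint ι := by
    rw [hT, comp_sub, sub_comp]
    simp only [comp_assoc]
    abel
  rw [hcomm]
  grw [norm_sub_le, opNorm_comp_le, opNorm_comp_le, adjoint.norm_map, adjoint.norm_map,
    norm_le_one_of_adjoint_comp_self hι]
  linarith

end Compression

section Localization

open Set Filter

variable {a b : ℝ} {f : ℝ → ℝ}

lemma exists_jensenDefect_lt_imp_norm_cfc_comp_cfc_le (hab : a < b)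
    (hf : StrictConvexOn ℝ (Icc a b) f) (hfc : ContinuousOn f (Icc a b)) {κ θ : ℝ} (hκ : 0 < κ)
    (hθ : 0 < θ) :
    ∃ δ > 0, ∀ (E : Type u) (F : Type v)
      [NormedAddCommGroup E] [InnerProductSpace ℂ E] [CompleteSpace E]
      [NormedAddCommGroup F] [InnerProductSpace ℂ F] [CompleteSpace F]
      (ι : F →L[ℂ] E) (H : E →L[ℂ] E), adjoint ι ∘L ι = 1 → IsSelfAdjoint H →
      spectrum ℝ H ⊆ Icc a b → ‖jensenDefect f ι H‖ < δ →
      ∀ g h : ℝ → ℝ, ContinuousOn g (Icc a b) → ContinuousOn h (Icc a b) →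
      (∀ t ∈ Icc a b, |g t| ≤ 1) → (∀ t ∈ Icc a b, |h t| ≤ 1) →
      (∀ s ∈ Icc a b, ∀ t ∈ Icc a b, g s ≠ 0 → h t ≠ 0 → κ ≤ |s - t|) →
      ‖cfc g H ∘L ι ∘L cfc h (compression ι H)‖ ≤ θ := by
  obtain ⟨γ, hγ, hgap⟩ := exists_pos_le_bregman isCompact_Icc hf hfc (half_pos hκ)
  obtain ⟨n, φ, s, c, e, hn, hφ, hs, hnonneg, he, hbe, hsum⟩ :=
    exists_partitionOfUnity_sum_bregman_le hab hf.convexOn hfc (half_pos hκ)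
      (by positivity : 0 < γ * θ ^ 2 / 2)
  have hn' : (0 : ℝ) < n := Nat.cast_pos.2 hn
  refine ⟨γ * θ ^ 2 / 2 / n, by positivity, ?_⟩
  intro E F _ _ _ _ _ _ ι H hι hH hHs hdefect g h hg hh hg_one hh_one hsep
  have hAs := spectrum_compression_subset_Icc hι hH hHs
  have hgq (j : Fin n) (hj : ∃ t ∈ Icc a b, φ j t * h t ≠ 0) :
      ∀ t ∈ Icc a b, γ * g t ^ 2 ≤ bregman f (c j) (s j) t := by
    obtain ⟨t₀, ht₀, hne⟩ := hj
    refine mul_sq_le_bregman (hnonneg j) (hgap (c j) (s j) (hs j) (hnonneg j)) hγ.le hg_one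
      fun t ht hgt => ?_
    have hst₀ := hφ j t₀ ht₀ (left_ne_zero_of_mul hne)
    have htt₀ := hsep t ht t₀ ht₀ hgt (right_ne_zero_of_mul hne)
    linarith [abs_sub_le t (s j) t₀, abs_sub_comm (s j) t₀]
  have hΔ (j : Fin n) : ‖jensenDefect (bregman f (c j) (s j)) ι H‖ ≤ γ * θ ^ 2 / 2 / n := by
    rw [jensenDefect_bregman hι hH hHs hAs hfc]
    exact hdefect.le
  refine norm_cfc_comp_cfc_compression_le hH hHs hAs φ
    (fun j => continuousOn_bregman hfc (c j) (s j)) hg hh hh_one hγ hθ.le he hbe hΔ hgq ?_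
  rw [Finset.sum_add_distrib, Fin.sum_const, nsmul_eq_mul, mul_div_cancel₀ _ hn'.ne']
  linarith

lemma exists_jensenDefect_lt_imp_norm_comp_sub_comp_compression_le (hab : a < b)
    (hf : StrictConvexOn ℝ (Icc a b) f) (hfc : ContinuousOn f (Icc a b)) {ε : ℝ} (hε : 0 < ε) :
    ∃ δ > 0, ∀ (E : Type u) (F : Type v)
      [NormedAddCommGroup E] [InnerProductSpace ℂ E] [CompleteSpace E]
      [NormedAddCommGroup F] [InnerProductSpace ℂ F] [CompleteSpace F]
      (ι : F →L[ℂ] E) (H : E →L[ℂ] E), adjoint ι ∘L ι = 1 → IsSelfAdjoint H →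
      spectrum ℝ H ⊆ Icc a b → ‖jensenDefect f ι H‖ < δ →
      ‖H ∘L ι - ι ∘L compression ι H‖ ≤ ε := by
  obtain ⟨n, hmesh, hn⟩ := (((tendsto_const_div_add_one (b - a)).eventually_lt_const
    (by positivity : 0 < ε / 34)).and (eventually_gt_atTop (0 : ℕ))).exists
  have hba : 0 < b - a := sub_pos.2 hab
  set κ := (b - a) / ((n : ℝ) + 1)
  have hκ : 0 < κ := by positivity
  obtain ⟨φ, hφ⟩ := exists_partitionOfUnity_hasMesh n hab hn
  set s : Fin n → ℝ := fun k => gridPoint a b n (k + 1)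
  have hs (k : Fin n) : s k ∈ Icc a b := Ioo_subset_Icc_self (gridPoint_mem_Ioo n hab k.2)
  set θ := ε / (2 * n ^ 2 * (b - a))
  have hθ : 0 < θ := by positivity
  obtain ⟨δ, hδ, hloc⟩ := exists_jensenDefect_lt_imp_norm_cfc_comp_cfc_le hab hf hfc hκ hθ
  refine ⟨δ, hδ, fun E F _ _ _ _ _ _ ι H hι hH hHs hdefect => ?_⟩
  have hfar (i j : Fin n) (hij : 3 * κ ≤ |s i - s j|) :
      ‖cfc (φ i) H ∘L ι ∘L cfc (φ j) (compression ι H)‖ ≤ θ := by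
    have hle (k : Fin n) (t : ℝ) : |φ k t| ≤ 1 := abs_le.2
      ⟨by linarith [φ.nonneg k t], φ.le_one k t⟩
    refine hloc E F ι H hι hH hHs hdefect _ _ (φ i).continuous.continuousOn
      (φ j).continuous.continuousOn (fun t _ => hle i t) (fun t _ => hle j t)
      fun p hp q hq hip hjq => ?_
    linarith [hφ.abs_sub_sub_le hp hq hip hjq]
  have hest := norm_comp_sub_comp_le hH hHs (isSelfAdjoint_compression hH ι)
    (spectrum_compression_subset_Icc hι hH hHs) ι hκ.le (by positivity) hθ.le hφ
    (fun i j => abs_sub_le_of_le_of_le (hs i).1 (hs i).2 (hs j).1 (hs j).2)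
    (card_filter_abs_gridPoint_sub_lt n hab) hfar
  have hθ_eq : (n : ℝ) ^ 2 * ((b - a) * θ) = ε / 2 := by
    simp only [θ]
    field_simp
  calc ‖H ∘L ι - ι ∘L compression ι H‖ ≤ (2 * κ + 5 * (3 * κ)) * ‖ι‖ + n ^ 2 * ((b - a) * θ) := by
        simpa using hest
    _ ≤ 17 * κ * 1 + ε / 2 := by
        grw [hθ_eq, norm_le_one_of_adjoint_comp_self hι]
        linarith
    _ ≤ ε := by linarith

end Localization

/-- **Corollary 2.9.** If `f` is strictly convex and continuous on `[a,b]` and `ε > 0`,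
then there is `δ > 0` such that for every Hilbert space `𝓗`, every closed subspace `M`
(presented as the range of an isometric embedding `ι : 𝓜 →L[ℂ] 𝓗`, whose associated
orthogonal projection onto `M` is `P = ι ι*`), and every self-adjoint `H` with
`σ(H) ⊆ [a,b]`:  `‖f(pr(H)) − pr(f(H))‖ < δ` implies `‖PH − HP‖ < ε`, where
`pr(T) = ι* T ι` is compression to `M`. -/
theorem stmt_10 (a b : ℝ) (hab : a ≤ b)
    (f : ℝ → ℝ) (hf : StrictConvexOn ℝ (Set.Icc a b) f)
    (hfc : ContinuousOn f (Set.Icc a b))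
    (ε : ℝ) (hε : 0 < ε) :
    ∃ δ : ℝ, 0 < δ ∧
      ∀ (𝓗 : Type u) (𝓜 : Type v)
        [NormedAddCommGroup 𝓗] [InnerProductSpace ℂ 𝓗] [CompleteSpace 𝓗]
        [NormedAddCommGroup 𝓜] [InnerProductSpace ℂ 𝓜] [CompleteSpace 𝓜]
        (ι : 𝓜 →L[ℂ] 𝓗), (∀ x y : 𝓜, ⟪ι x, ι y⟫_ℂ = ⟪x, y⟫_ℂ) →
        ∀ H : 𝓗 →L[ℂ] 𝓗, IsSelfAdjoint H → spectrum ℝ H ⊆ Set.Icc a b →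
        ‖cfc f ((adjoint ι) ∘L H ∘L ι) - (adjoint ι) ∘L (cfc f H) ∘L ι‖ < δ →
        ‖(ι ∘L adjoint ι) ∘L H - H ∘L (ι ∘L adjoint ι)‖ < ε := by
  rcases hab.eq_or_lt with rfl | hab
  · refine ⟨1, one_pos, fun 𝓗 𝓜 _ _ _ _ _ _ ι _ H hH hHs _ => ?_⟩
    rw [Set.Icc_self] at hHs
    rw [CFC.eq_algebraMap_of_spectrum_subset_singleton H a hHs]
    simpa [Algebra.algebraMap_eq_smul_one, one_def] using hε
  · obtain ⟨δ, hδ, hclose⟩ :=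
      exists_jensenDefect_lt_imp_norm_comp_sub_comp_compression_le hab hf hfc
        (by positivity : 0 < ε / 3)
    refine ⟨δ, hδ, fun 𝓗 𝓜 _ _ _ _ _ _ ι hι H hH hHs hdefect => ?_⟩
    have hι' : adjoint ι ∘L ι = 1 := (inner_map_map_iff_adjoint_comp_self ι).1 hι
    calc ‖(ι ∘L adjoint ι) ∘L H - H ∘L (ι ∘L adjoint ι)‖
        ≤ 2 * ‖H ∘L ι - ι ∘L compression ι H‖ := norm_commutator_le_two_mul hι' hH
      _ ≤ 2 * (ε / 3) := by gcongr; exact hclose 𝓗 𝓜 ι H hι' hH hHs hdefect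
      _ < ε := by linarith
end

section
/- Let I ⊆ ℝ be an interval, let f : I → ℝ be a strictly convex continuous function, let 𝓗 be a complex Hilbert space, and let (Hᵢ)_{i∈ι} be a net of self-adjoint bounded operators on 𝓗 with σ(Hᵢ) ⊆ I for all i, such that (Hᵢ) converges in the weak operator topology to a self-adjoint bounded operator H with σ(H) ⊆ I and (f(Hᵢ)) converges in the weak operator topology to f(H). Assume further that if I is unbounded on the right, then f(x) > 0 for all sufficiently large x and x² = O(f(x)) as x → +∞, and if I is unbounded on the left, then f(x) > 0 for all sufficiently small x and x² = O(f(x)) as x → −∞. Then (Hᵢ) converges in the strong operator topology to H. -/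
set_option synthInstance.maxHeartbeats 400000
set_option maxHeartbeats 800000

open scoped InnerProductSpace
open Filter Topology

/-!
Let `T` be the limit and let `u` lie in a spectral subspace of `T` for a short interval
`[m - η, m + η]`. Subtracting a supporting line of `f` at `m` gives a function `g ≥ 0` on `I` whose
quadratic form at `u` converges along the net to a number of size at most `‖u‖ ^ 2` times the second
difference of `f` at `m` with step `η`. Strict convexity and the growth of `f` bound the squared
distance of `x ∈ I` to a slightly enlarged interval `[p - δ, q + δ]` by `C * g x`, with `C`
independent of `m ∈ (p, q)`. Cutting a vector of the spectral subspace of `[p, q]` into pieces of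
spectral width `2 η` and applying Cauchy-Schwarz costs the sum of the second differences, which
telescopes and tends to `0` with `η`. Hence the part of `H i` outside `[p - δ, q + δ]` tends to zero
strongly on this subspace.

Applied to an interval of length `2 η` in place of `[p, q]` this yields `‖(H i - T) u‖ ≤ 4 η ‖u‖`
eventually. Cutting an arbitrary vector into `O(1 / η)` such pieces, Cauchy-Schwarz bounds
`‖(H i - T) v‖ ^ 2` by `O(1 / η) * (4 η) ^ 2 * ‖v‖ ^ 2`.
-/

noncomputable section

open Set

section Convexity

variable {f : ℝ → ℝ} {I : Set ℝ} {m p q s t x δ η : ℝ}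

/-- The height of the graph of `f` above the line of slope `s` through `(m, f m)`. -/
def lineGap (f : ℝ → ℝ) (m s x : ℝ) : ℝ := f x - (f m + s * (x - m))

/-- `s` is a subgradient of `f` at `m` relative to `I`: the line of slope `s` through `(m, f m)`
supports the graph of `f` over all of `I`. -/
def IsSubgradientOn (f : ℝ → ℝ) (I : Set ℝ) (m s : ℝ) : Prop := ∀ x ∈ I, 0 ≤ lineGap f m s x

lemma convexOn_lineGap (hf : ConvexOn ℝ I f) (m s : ℝ) : ConvexOn ℝ I (lineGap f m s) := by
  refine ⟨hf.1, fun x hx y hy a b ha hb hab => ?_⟩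
  have hconv := hf.2 hx hy ha hb hab
  obtain rfl : b = 1 - a := by linarith
  simp only [lineGap, smul_eq_mul] at hconv ⊢
  linarith

lemma exists_isSubgradientOn (hf : ConvexOn ℝ I f) (hm : m ∈ interior I) :
    ∃ s, IsSubgradientOn f I m s := by
  refine ⟨derivWithin f (Ioi m) m, fun x hx => ?_⟩
  rcases lt_trichotomy x m with hlt | rfl | hgt
  · have hslope := (hf.slope_le_leftDeriv_of_mem_interior hx hm hlt).trans
      (hf.leftDeriv_le_rightDeriv_of_mem_interior hm)
    rw [slope_def_field, div_le_iff₀ (sub_pos.2 hlt)] at hslope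
    rw [lineGap]
    linarith
  · simp [lineGap]
  · have hslope := hf.rightDeriv_le_slope_of_mem_interior hm hx hgt
    rw [slope_def_field, le_div_iff₀ (sub_pos.2 hgt)] at hslope
    rw [lineGap]
    linarith

lemma IsSubgradientOn.lineGap_pos (hs : IsSubgradientOn f I m s) (hf : StrictConvexOn ℝ I f)
    (hm : m ∈ I) (hx : x ∈ I) (hxm : x ≠ m) : 0 < lineGap f m s x := by
  have hmid := hf.2 hm hx hxm.symm one_half_pos one_half_pos (add_halves 1)
  have hmem : (1 / 2 : ℝ) • m + (1 / 2 : ℝ) • x ∈ I :=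
    hf.1 hm hx one_half_pos.le one_half_pos.le (add_halves 1)
  have hgap := hs _ hmem
  simp only [lineGap, smul_eq_mul] at hmid hgap ⊢
  linarith

lemma IsSubgradientOn.mono (hs : IsSubgradientOn f I m s) (ht : IsSubgradientOn f I q t)
    (hm : m ∈ I) (hq : q ∈ I) (hmq : m < q) : s ≤ t := by
  have hsq := hs q hq
  have htm := ht m hm
  rw [lineGap] at hsq htm
  exact le_of_mul_le_mul_right (by linarith : s * (q - m) ≤ t * (q - m)) (sub_pos.2 hmq)

lemma IsSubgradientOn.lineGap_le_lineGap (hs : IsSubgradientOn f I m s)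
    (ht : IsSubgradientOn f I q t) (hm : m ∈ I) (hq : q ∈ I) (hmq : m < q) (hqx : q ≤ x) :
    lineGap f q t x ≤ lineGap f m s x := by
  have hsq := hs q hq
  have hst := mul_le_mul_of_nonneg_right (hs.mono ht hm hq hmq) (sub_nonneg.2 hqx)
  rw [lineGap] at hsq ⊢
  rw [lineGap]
  linarith

/-- The second difference of `f` at `m` with step `η`. -/
def secondDifference (f : ℝ → ℝ) (η m : ℝ) : ℝ := f (m + η) - 2 * f m + f (m - η)

lemma secondDifference_pos (hf : StrictConvexOn ℝ I f) (hl : m - η ∈ I) (hr : m + η ∈ I)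
    (hη : 0 < η) : 0 < secondDifference f η m := by
  have hmid := hf.2 hl hr (by linarith) one_half_pos one_half_pos (add_halves 1)
  rw [show (1 / 2 : ℝ) • (m - η) + (1 / 2 : ℝ) • (m + η) = m by
    simp only [smul_eq_mul]; ring] at hmid
  simp only [smul_eq_mul] at hmid
  rw [secondDifference]
  linarith

lemma IsSubgradientOn.lineGap_le_secondDifference (hs : IsSubgradientOn f I m s)
    (hf : ConvexOn ℝ I f) (hl : m - η ∈ I) (hr : m + η ∈ I) (hx : x ∈ Icc (m - η) (m + η)) :
    lineGap f m s x ≤ secondDifference f η m := by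
  calc lineGap f m s x ≤ max (lineGap f m s (m - η)) (lineGap f m s (m + η)) :=
        (convexOn_lineGap hf m s).le_max_of_mem_Icc hl hr hx
    _ ≤ lineGap f m s (m - η) + lineGap f m s (m + η) := max_le_add_of_nonneg (hs _ hl) (hs _ hr)
    _ = secondDifference f η m := by simp only [lineGap, secondDifference]; ring

/-- `f` grows at least quadratically at the right end of `I`; this is no condition at all if `I` is
bounded above. -/
def HasQuadraticGrowthRight (f : ℝ → ℝ) (I : Set ℝ) : Prop :=
  ∃ C > 0, ∃ R, ∀ x ∈ I, R < x → x ^ 2 ≤ C * f x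

lemma hasQuadraticGrowthRight_of_not_bddAbove_imp
    (h : ¬BddAbove I → ∃ C > 0, ∃ R, ∀ x ∈ I, R < x → x ^ 2 ≤ C * f x) :
    HasQuadraticGrowthRight f I := by
  by_cases hI : BddAbove I
  · obtain ⟨R, hR⟩ := hI
    exact ⟨1, one_pos, R, fun x hx hRx => ((hR hx).not_gt hRx).elim⟩
  · exact h hI

lemma hasQuadraticGrowthRight_comp_neg_of_not_bddBelow_imp
    (h : ¬BddBelow I → ∃ C > 0, ∃ R, ∀ x ∈ I, x < R → x ^ 2 ≤ C * f x) :
    HasQuadraticGrowthRight (fun x => f (-x)) (-I) := by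
  refine hasQuadraticGrowthRight_of_not_bddAbove_imp fun hI => ?_
  obtain ⟨C, hC, R, hR⟩ := h (bddAbove_neg.not.1 hI)
  exact ⟨C, hC, -R, fun x hx hRx => by simpa using hR (-x) hx (by linarith)⟩

lemma exists_mul_le_lineGap (hf : StrictConvexOn ℝ I f) (hs : IsSubgradientOn f I q s)
    (hq : q ∈ I) (hqδ : q + δ ∈ I) (hδ : 0 < δ) :
    ∃ κ > 0, ∀ x ∈ I, q + δ ≤ x → κ * (x - q) ≤ lineGap f q s x := by
  have hpos := hs.lineGap_pos hf hq hqδ (by linarith)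
  refine ⟨lineGap f q s (q + δ) / δ, div_pos hpos hδ, fun x hx hqx => ?_⟩
  have hsec := (convexOn_lineGap hf.convexOn q s).secant_mono hq hqδ hx (by linarith)
    (by linarith) hqx
  have hself : lineGap f q s q = 0 := by simp [lineGap]
  rwa [hself, sub_zero, sub_zero, add_sub_cancel_left, le_div_iff₀ (by linarith)] at hsec

lemma exists_affine_le_mul (a b : ℝ) (hδ : 0 < δ) :
    ∃ K ≥ 0, ∀ y, δ ≤ y → a + b * y ≤ K * y := by
  refine ⟨|a| / δ + |b|, by positivity, fun y hy => ?_⟩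
  have hy0 : 0 ≤ y := hδ.le.trans hy
  calc a + b * y ≤ |a| * (y / δ) + |b| * y := by
        gcongr
        · exact (le_abs_self a).trans
            (le_mul_of_one_le_right (abs_nonneg a) ((one_le_div hδ).2 hy))
        · exact le_abs_self b
    _ = (|a| / δ + |b|) * y := by ring

lemma exists_sq_le_lineGap_of_quadraticGrowth (hf : StrictConvexOn ℝ I f)
    (hs : IsSubgradientOn f I q s) (hq : q ∈ I) (hδ : 0 < δ)
    (hgrowth : HasQuadraticGrowthRight f I) :
    ∃ C > 0, ∀ x ∈ I, q + δ ≤ x → (x - q) ^ 2 ≤ C * lineGap f q s x := by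
  by_cases hqδ : q + δ ∈ I
  swap
  · exact ⟨1, one_pos, fun x hx hqx =>
      (hqδ (hf.1.ordConnected.out hq hx ⟨by linarith, hqx⟩)).elim⟩
  obtain ⟨κ, hκ, hlin⟩ := exists_mul_le_lineGap hf hs hq hqδ hδ
  obtain ⟨C, hC, R, hR⟩ := hgrowth
  obtain ⟨K, hK, hKle⟩ := exists_affine_le_mul (C * f q + q ^ 2) (C * s) hδ
  refine ⟨max (|R - q| / κ) (2 * C + 2 * K / κ), lt_max_of_lt_right (by positivity),
    fun x hx hqx => ?_⟩
  have hgap : 0 ≤ lineGap f q s x := hs x hx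
  have hxq : 0 < x - q := by linarith
  have hlin' : x - q ≤ lineGap f q s x / κ := by
    rw [le_div_iff₀ hκ, mul_comm]
    exact hlin x hx hqx
  rcases le_or_gt x R with hxR | hxR
  · calc (x - q) ^ 2 = (x - q) * (x - q) := sq _
      _ ≤ |R - q| * (lineGap f q s x / κ) := by
        gcongr
        exact (sub_le_sub_right hxR q).trans (le_abs_self _)
      _ = |R - q| / κ * lineGap f q s x := by ring
      _ ≤ _ := by gcongr; exact le_max_left _ _
  · have hsq : x ^ 2 + q ^ 2 ≤ C * lineGap f q s x + K * (x - q) := by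
      have hRx := hR x hx hxR
      have hKx := hKle (x - q) (by linarith)
      rw [lineGap]
      linarith
    calc (x - q) ^ 2 ≤ 2 * (x ^ 2 + q ^ 2) := by linarith [sq_nonneg (x + q)]
      _ ≤ 2 * (C * lineGap f q s x + K * (lineGap f q s x / κ)) := by
        have := mul_le_mul_of_nonneg_left hlin' hK
        linarith
      _ = (2 * C + 2 * K / κ) * lineGap f q s x := by ring
      _ ≤ _ := by gcongr; exact le_max_right _ _

lemma exists_sq_le_lineGap_right (hf : StrictConvexOn ℝ I f) (hp : p ∈ I) (hq : q ∈ I)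
    (hδ : 0 < δ) (hgrowth : HasQuadraticGrowthRight f I) :
    ∃ C > 0, ∀ m ∈ Ioo p q, ∀ s, IsSubgradientOn f I m s → ∀ x ∈ I, q + δ ≤ x →
      (x - q) ^ 2 ≤ C * lineGap f m s x := by
  by_cases hint : q ∈ interior I
  · obtain ⟨t, ht⟩ := exists_isSubgradientOn hf.convexOn hint
    obtain ⟨C, hC, hle⟩ := exists_sq_le_lineGap_of_quadraticGrowth hf ht hq hδ hgrowth
    refine ⟨C, hC, fun m hm s hs x hx hqx => (hle x hx hqx).trans ?_⟩
    have hmI : m ∈ I := hf.1.ordConnected.out hp hq (Ioo_subset_Icc_self hm)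
    gcongr
    exact hs.lineGap_le_lineGap ht hmI hq hm.2 (by linarith)
  · refine ⟨1, one_pos, fun m hm _ _ x hx hqx => (hint ?_).elim⟩
    exact interior_mono (hf.1.ordConnected.out hp hx)
      (by rw [interior_Icc]; exact ⟨hm.1.trans hm.2, by linarith⟩)

lemma lineGap_comp_neg (f : ℝ → ℝ) (m s x : ℝ) :
    lineGap (fun y => f (-y)) m s x = lineGap f (-m) (-s) (-x) := by
  simp only [lineGap]; ring

lemma strictConvexOn_comp_neg (hf : StrictConvexOn ℝ I f) :
    StrictConvexOn ℝ (-I) (fun x => f (-x)) := by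
  refine ⟨hf.1.neg, fun x hx y hy hxy a b ha hb hab => ?_⟩
  have := hf.2 hx hy (neg_injective.ne hxy) ha hb hab
  simpa only [smul_neg, ← neg_add] using this

lemma exists_sq_le_lineGap_left (hf : StrictConvexOn ℝ I f) (hp : p ∈ I) (hq : q ∈ I)
    (hδ : 0 < δ) (hgrowth : HasQuadraticGrowthRight (fun x => f (-x)) (-I)) :
    ∃ C > 0, ∀ m ∈ Ioo p q, ∀ s, IsSubgradientOn f I m s → ∀ x ∈ I, x ≤ p - δ →
      (x - p) ^ 2 ≤ C * lineGap f m s x := by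
  obtain ⟨C, hC, hle⟩ := exists_sq_le_lineGap_right (strictConvexOn_comp_neg hf)
    (p := -q) (q := -p) (by simpa using hq) (by simpa using hp) hδ hgrowth
  refine ⟨C, hC, fun m hm s hs x hx hxp => ?_⟩
  have hsneg : IsSubgradientOn (fun y => f (-y)) (-I) (-m) (-s) := fun y hy => by
    rw [lineGap_comp_neg, neg_neg, neg_neg]
    exact hs _ hy
  have := hle (-m) ⟨by linarith [hm.2], by linarith [hm.1]⟩ (-s) hsneg (-x) (by simpa using hx)
    (by linarith)
  rw [lineGap_comp_neg, neg_neg, neg_neg, neg_neg] at this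
  linarith

/-- The point of `[a, b]` nearest to `x`, for `a ≤ b`. -/
def clamp (a b x : ℝ) : ℝ := max a (min b x)

/-- The signed distance from `x` to the interval `[a, b]`. -/
def overshoot (a b x : ℝ) : ℝ := x - clamp a b x

lemma exists_overshoot_sq_le_lineGap (hf : StrictConvexOn ℝ I f) (hp : p ∈ I) (hq : q ∈ I)
    (hδ : 0 < δ) (hright : HasQuadraticGrowthRight f I)
    (hleft : HasQuadraticGrowthRight (fun x => f (-x)) (-I)) :
    ∃ C > 0, ∀ m ∈ Ioo p q, ∀ s, IsSubgradientOn f I m s → ∀ x ∈ I,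
      overshoot (p - δ) (q + δ) x ^ 2 ≤ C * lineGap f m s x := by
  obtain ⟨C₁, hC₁, hle₁⟩ := exists_sq_le_lineGap_left hf hp hq hδ hleft
  obtain ⟨C₂, -, hle₂⟩ := exists_sq_le_lineGap_right hf hp hq hδ hright
  refine ⟨max C₁ C₂, lt_max_of_lt_left hC₁, fun m hm s hs x hx => ?_⟩
  have hgap : 0 ≤ lineGap f m s x := hs x hx
  have hpq : p < q := hm.1.trans hm.2
  rcases lt_or_ge x (p - δ) with hxp | hxp
  · have : overshoot (p - δ) (q + δ) x = x - (p - δ) := by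
      rw [overshoot, clamp, max_eq_left ((min_le_right _ _).trans hxp.le)]
    calc overshoot (p - δ) (q + δ) x ^ 2 ≤ (x - p) ^ 2 := by rw [this]; nlinarith
      _ ≤ C₁ * lineGap f m s x := hle₁ m hm s hs x hx hxp.le
      _ ≤ _ := by gcongr; exact le_max_left _ _
  rcases lt_or_ge (q + δ) x with hxq | hxq
  · have : overshoot (p - δ) (q + δ) x = x - (q + δ) := by
      rw [overshoot, clamp, min_eq_left hxq.le, max_eq_right (by linarith)]
    calc overshoot (p - δ) (q + δ) x ^ 2 ≤ (x - q) ^ 2 := by rw [this]; nlinarith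
      _ ≤ C₂ * lineGap f m s x := hle₂ m hm s hs x hx hxq.le
      _ ≤ _ := by gcongr; exact le_max_right _ _
  · rw [overshoot, clamp, min_eq_right hxq, max_eq_right hxp, sub_self, zero_pow two_ne_zero]
    exact mul_nonneg (le_max_of_le_left hC₁.le) hgap

end Convexity

section Grid

variable {f : ℝ → ℝ} {a b p q x : ℝ} {N k : ℕ}

/-- The step of the subdivision of `[p, q]` into `N + 1` intervals of equal length. -/
def mesh (p q : ℝ) (N : ℕ) : ℝ := (q - p) / (N + 1)

/-- The `k`-th interior point (`0 ≤ k < N`) of the subdivision of `[p, q]` of step `mesh p q N`. -/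
def gridCenter (p q : ℝ) (N k : ℕ) : ℝ := p + (k + 1) * mesh p q N

/-- The `k`-th cell of the subdivision: an open set that meets `[p, q]` inside the interval of
radius `mesh p q N` about `gridCenter p q N k`. Because of the clamping, the first and the last cell
contain the endpoints `p` and `q`. -/
def gridCell (p q : ℝ) (N k : ℕ) : Set ℝ :=
  clamp (p + mesh p q N) (q - mesh p q N) ⁻¹' Metric.ball (gridCenter p q N k) (mesh p q N)

@[fun_prop]
lemma continuous_clamp (a b : ℝ) : Continuous (clamp a b) := by
  unfold clamp; fun_prop

@[fun_prop]
lemma continuous_overshoot (a b : ℝ) : Continuous (overshoot a b) := by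
  unfold overshoot; fun_prop

lemma clamp_mem_Icc (hab : a ≤ b) (x : ℝ) : clamp a b x ∈ Icc a b :=
  ⟨le_max_left _ _, max_le hab (min_le_left _ _)⟩

lemma mesh_pos (hpq : p < q) (N : ℕ) : 0 < mesh p q N :=
  div_pos (sub_pos.2 hpq) N.cast_add_one_pos

lemma add_mul_mesh (p q : ℝ) (N : ℕ) : p + (N + 1) * mesh p q N = q := by
  have : (N : ℝ) + 1 ≠ 0 := N.cast_add_one_ne_zero
  rw [mesh]
  field_simp
  ring

lemma tendsto_mesh (p q : ℝ) : Tendsto (mesh p q) atTop (𝓝 0) :=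
  tendsto_const_nhds.div_atTop
    (tendsto_atTop_add_const_right _ 1 tendsto_natCast_atTop_atTop)

lemma gridCenter_mem_Icc (hpq : p < q) (hk : k < N) :
    gridCenter p q N k ∈ Icc (p + mesh p q N) (q - mesh p q N) := by
  have hη := mesh_pos hpq N
  have hq := add_mul_mesh p q N
  have hkN : (k : ℝ) + 1 ≤ N := by exact_mod_cast hk
  rw [gridCenter]
  constructor <;> nlinarith [k.cast_nonneg (α := ℝ)]

lemma gridCenter_sub_mesh_mem_Icc (hpq : p < q) (hk : k < N) :
    gridCenter p q N k - mesh p q N ∈ Icc p q := by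
  obtain ⟨hl, hr⟩ := gridCenter_mem_Icc hpq hk
  constructor <;> linarith [mesh_pos hpq N]

lemma gridCenter_add_mesh_mem_Icc (hpq : p < q) (hk : k < N) :
    gridCenter p q N k + mesh p q N ∈ Icc p q := by
  obtain ⟨hl, hr⟩ := gridCenter_mem_Icc hpq hk
  constructor <;> linarith [mesh_pos hpq N]

lemma gridCenter_mem_Ioo (hpq : p < q) (hk : k < N) : gridCenter p q N k ∈ Ioo p q := by
  obtain ⟨hl, hr⟩ := gridCenter_mem_Icc hpq hk
  constructor <;> linarith [mesh_pos hpq N]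

lemma isOpen_gridCell (p q : ℝ) (N k : ℕ) : IsOpen (gridCell p q N k) :=
  Metric.isOpen_ball.preimage (continuous_clamp _ _)

lemma exists_mem_gridCell (hpq : p < q) (hN : 1 ≤ N) (x : ℝ) : ∃ k < N, x ∈ gridCell p q N k := by
  have hη := mesh_pos hpq N
  have hq := add_mul_mesh p q N
  have hN' : (1 : ℝ) ≤ N := by exact_mod_cast hN
  obtain ⟨hl, hr⟩ := clamp_mem_Icc (a := p + mesh p q N) (b := q - mesh p q N) (by nlinarith) x
  set c := clamp (p + mesh p q N) (q - mesh p q N) x with hc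
  have hratio : 0 ≤ (c - (p + mesh p q N)) / mesh p q N := div_nonneg (sub_nonneg.2 hl) hη.le
  have hfloor := Nat.floor_le hratio
  have hfloor' := Nat.lt_floor_add_one ((c - (p + mesh p q N)) / mesh p q N)
  set k := ⌊(c - (p + mesh p q N)) / mesh p q N⌋₊
  rw [le_div_iff₀ hη] at hfloor
  rw [div_lt_iff₀ hη] at hfloor'
  refine ⟨k, ?_, ?_⟩
  · have : (k : ℝ) < N := by nlinarith
    exact_mod_cast this
  · rw [gridCell, mem_preimage, Metric.mem_ball, Real.dist_eq, ← hc, gridCenter, abs_lt]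
    constructor <;> linarith

lemma Icc_inter_gridCell_subset (hpq : p < q) (hk : k < N) :
    Icc p q ∩ gridCell p q N k ⊆
      Icc (gridCenter p q N k - mesh p q N) (gridCenter p q N k + mesh p q N) := by
  rintro x ⟨⟨hpx, hxq⟩, hx⟩
  obtain ⟨hl, hr⟩ := gridCenter_mem_Icc hpq hk
  rw [gridCell, mem_preimage, Metric.mem_ball, Real.dist_eq, abs_lt] at hx
  have hη := mesh_pos hpq N
  have hq := add_mul_mesh p q N
  constructor
  · by_contra! hlt
    have hk1 : 1 ≤ k := by
      by_contra! hk0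
      simp only [Nat.lt_one_iff.1 hk0, gridCenter] at hlt
      push_cast at hlt
      linarith
    have hk1' : (1 : ℝ) ≤ k := by exact_mod_cast hk1
    have hclamp : clamp (p + mesh p q N) (q - mesh p q N) x ≤ gridCenter p q N k - mesh p q N :=
      max_le (by rw [gridCenter]; nlinarith) ((min_le_right _ _).trans hlt.le)
    linarith
  · by_contra! hlt
    have hkN : k + 2 ≤ N := by
      by_contra! hkN
      obtain rfl : N = k + 1 := by omega
      rw [gridCenter] at hlt
      push_cast at hq
      linarith
    have hkN' : (k : ℝ) + 2 ≤ N := by exact_mod_cast hkN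
    have hclamp : gridCenter p q N k + mesh p q N ≤ clamp (p + mesh p q N) (q - mesh p q N) x :=
      (le_min (by rw [gridCenter]; nlinarith) hlt.le).trans (le_max_right _ _)
    linarith

lemma sum_secondDifference (f : ℝ → ℝ) (p q : ℝ) (N : ℕ) :
    ∑ k ∈ Finset.range N, secondDifference f (mesh p q N) (gridCenter p q N k) =
      (f q - f (q - mesh p q N)) - (f (p + mesh p q N) - f p) := by
  set g : ℕ → ℝ := fun k => f (p + (k + 1) * mesh p q N) - f (p + k * mesh p q N) with hg
  have hterm : ∀ k, secondDifference f (mesh p q N) (gridCenter p q N k) = g (k + 1) - g k := by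
    intro k
    simp only [secondDifference, gridCenter, hg]
    push_cast
    ring_nf
  have hq : q - mesh p q N = p + N * mesh p q N := by linarith [add_mul_mesh p q N]
  rw [Finset.sum_congr rfl fun k _ => hterm k, Finset.sum_range_sub]
  simp only [hg, hq, add_mul_mesh, Nat.cast_zero, zero_add, one_mul, zero_mul, add_zero]

lemma tendsto_sum_secondDifference (hpq : p < q) (hf : ContinuousOn f (Icc p q)) :
    Tendsto (fun N => ∑ k ∈ Finset.range N,
      secondDifference f (mesh p q N) (gridCenter p q N k)) atTop (𝓝 0) := by
  have hmem : ∀ N, p + mesh p q N ∈ Icc p q ∧ q - mesh p q N ∈ Icc p q := fun N => by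
    have hη := mesh_pos hpq N
    have hle : mesh p q N ≤ q - p := div_le_self (sub_pos.2 hpq).le (by simp)
    exact ⟨⟨by linarith, by linarith⟩, by linarith, by linarith⟩
  have hright : Tendsto (fun N => f (q - mesh p q N)) atTop (𝓝 (f q)) :=
    (hf q (right_mem_Icc.2 hpq.le)).tendsto.comp (tendsto_nhdsWithin_iff.2
      ⟨by simpa using (tendsto_mesh p q).const_sub q, .of_forall fun N => (hmem N).2⟩)
  have hleft : Tendsto (fun N => f (p + mesh p q N)) atTop (𝓝 (f p)) :=
    (hf p (left_mem_Icc.2 hpq.le)).tendsto.comp (tendsto_nhdsWithin_iff.2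
      ⟨by simpa using (tendsto_mesh p q).const_add p, .of_forall fun N => (hmem N).1⟩)
  simp only [sum_secondDifference]
  simpa using (hright.const_sub (f q)).sub (hleft.sub_const (f p))

end Grid

section FunctionalCalculus

variable {𝓗 : Type*} [NormedAddCommGroup 𝓗] [InnerProductSpace ℂ 𝓗]

lemma reApplyInnerSelf_algebraMap (d : ℝ) (u : 𝓗) :
    (algebraMap ℝ (𝓗 →L[ℂ] 𝓗) d).reApplyInnerSelf u = d * ‖u‖ ^ 2 := by
  rw [ContinuousLinearMap.reApplyInnerSelf_apply, Algebra.algebraMap_eq_smul_one, smul_apply,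
    one_apply_eq_self, inner_smul_left_eq_smul, RCLike.smul_re, inner_self_eq_norm_sq]

variable [CompleteSpace 𝓗] {A T : 𝓗 →L[ℂ] 𝓗} {φ ψ g h : ℝ → ℝ} {S S' : Set ℝ} {d : ℝ}
  {u w : 𝓗}

lemma reApplyInnerSelf_cfc_mono (hg : ContinuousOn g (spectrum ℝ A))
    (hh : ContinuousOn h (spectrum ℝ A)) (hgh : ∀ x ∈ spectrum ℝ A, g x ≤ h x) (u : 𝓗) :
    (cfc g A).reApplyInnerSelf u ≤ (cfc h A).reApplyInnerSelf u := by
  have hle : cfc g A ≤ cfc h A := cfc_mono hgh hg hh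
  rw [ContinuousLinearMap.le_def] at hle
  have hnonneg := hle.re_inner_nonneg_left u
  rwa [sub_apply, inner_sub_left, map_sub, sub_nonneg] at hnonneg

lemma norm_cfc_apply_sq_s17 (hg : ContinuousOn g (spectrum ℝ A)) (u : 𝓗) :
    ‖cfc g A u‖ ^ 2 = (cfc (fun x => g x ^ 2) A).reApplyInnerSelf u := by
  have hsymm : IsSelfAdjoint (cfc g A) := cfc_predicate g A
  rw [ContinuousLinearMap.reApplyInnerSelf_apply, cfc_congr fun x _ => sq (g x),
    cfc_mul g g A hg hg, mul_apply_eq_comp]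
  exact (inner_self_eq_norm_sq _).symm.trans
    (congrArg RCLike.re (hsymm.isSymmetric (cfc g A u) u).symm)

lemma norm_cfc_apply_sq_le (hg : ContinuousOn g (spectrum ℝ A))
    (hh : ContinuousOn h (spectrum ℝ A)) (hgh : ∀ x ∈ spectrum ℝ A, g x ^ 2 ≤ h x) (u : 𝓗) :
    ‖cfc g A u‖ ^ 2 ≤ (cfc h A).reApplyInnerSelf u :=
  (norm_cfc_apply_sq_s17 hg u).trans_le (reApplyInnerSelf_cfc_mono (hg.pow 2) hh hgh u)

lemma cfc_lineGap (hA : IsSelfAdjoint A) (hg : ContinuousOn g (spectrum ℝ A)) (m s : ℝ) :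
    cfc (lineGap g m s) A = cfc g A - s • A + algebraMap ℝ (𝓗 →L[ℂ] 𝓗) (s * m - g m) := by
  have heq : lineGap g m s = fun x => (g x - s * x) + (s * m - g m) := by
    ext x; rw [lineGap]; ring
  rw [heq, cfc_add_const (s * m - g m) (fun x => g x - s * x) A (by fun_prop),
    cfc_sub g (fun x => s * x) A hg (by fun_prop), cfc_const_mul_id s A]

lemma reApplyInnerSelf_cfc_lineGap (hA : IsSelfAdjoint A) (hg : ContinuousOn g (spectrum ℝ A))
    (m s : ℝ) (u : 𝓗) :
    (cfc (lineGap g m s) A).reApplyInnerSelf u =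
      (cfc g A).reApplyInnerSelf u - s * A.reApplyInnerSelf u + (s * m - g m) * ‖u‖ ^ 2 := by
  rw [← reApplyInnerSelf_algebraMap, cfc_lineGap hA hg]
  simp only [ContinuousLinearMap.reApplyInnerSelf_apply, add_apply, sub_apply, smul_apply,
    inner_add_left, inner_sub_left, inner_smul_left_eq_smul, map_add, map_sub, RCLike.smul_re]

/-- The spectral subspace of `T` for the set `S`, defined without spectral measures as the set of
vectors killed by `φ(T)` for every continuous `φ` that vanishes on `S ∩ σ(T)`. -/
def spectralSubspace (T : 𝓗 →L[ℂ] 𝓗) (S : Set ℝ) : Submodule ℂ 𝓗 :=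
  ⨅ (φ : ℝ → ℝ) (_ : ContinuousOn φ (spectrum ℝ T)) (_ : EqOn φ 0 (S ∩ spectrum ℝ T)),
    (cfc φ T).ker

lemma mem_spectralSubspace : w ∈ spectralSubspace T S ↔ ∀ φ : ℝ → ℝ,
    ContinuousOn φ (spectrum ℝ T) → EqOn φ 0 (S ∩ spectrum ℝ T) → cfc φ T w = 0 := by
  simp only [spectralSubspace, Submodule.mem_iInf, LinearMap.mem_ker, ContinuousLinearMap.coe_coe]

lemma spectralSubspace_mono (hS : S ⊆ S') : spectralSubspace T S ≤ spectralSubspace T S' :=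
  fun _ hw => mem_spectralSubspace.2 fun φ hφ hφ0 =>
    mem_spectralSubspace.1 hw φ hφ (hφ0.mono (inter_subset_inter_left _ hS))

lemma mem_spectralSubspace_of_spectrum_subset (hT : spectrum ℝ T ⊆ S) (w : 𝓗) :
    w ∈ spectralSubspace T S :=
  mem_spectralSubspace.2 fun φ _ hφ0 => by
    rw [inter_eq_right.2 hT] at hφ0
    rw [cfc_congr hφ0, Pi.zero_def, cfc_const_zero, zero_apply]

lemma cfc_apply_eq_of_eqOn (hw : w ∈ spectralSubspace T S) (hφ : ContinuousOn φ (spectrum ℝ T))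
    (hψ : ContinuousOn ψ (spectrum ℝ T)) (heq : EqOn φ ψ (S ∩ spectrum ℝ T)) :
    cfc φ T w = cfc ψ T w := by
  have := mem_spectralSubspace.1 hw (fun x => φ x - ψ x) (hφ.sub hψ)
    fun x hx => sub_eq_zero.2 (heq hx)
  rwa [cfc_sub φ ψ T hφ hψ, sub_apply, sub_eq_zero] at this

lemma cfc_apply_mem_spectralSubspace (hw : w ∈ spectralSubspace T S)
    (hφ : ContinuousOn φ (spectrum ℝ T)) (hφ0 : ∀ x ∉ S', φ x = 0) :
    cfc φ T w ∈ spectralSubspace T (S ∩ S') := by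
  refine mem_spectralSubspace.2 fun ψ hψ hψ0 => ?_
  rw [← mul_apply_eq_comp, ← cfc_mul ψ φ T hψ hφ]
  refine mem_spectralSubspace.1 hw _ (hψ.mul hφ) fun x hx => ?_
  by_cases hxS' : x ∈ S'
  · simp [hψ0 ⟨⟨hx.1, hxS'⟩, hx.2⟩]
  · simp [hφ0 x hxS']

lemma reApplyInnerSelf_cfc_le (hT : IsSelfAdjoint T) (hu : u ∈ spectralSubspace T S)
    (hh : ContinuousOn h (spectrum ℝ T)) (hle : ∀ x ∈ S ∩ spectrum ℝ T, h x ≤ d) :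
    (cfc h T).reApplyInnerSelf u ≤ d * ‖u‖ ^ 2 := by
  have hmax : ContinuousOn (fun x => max (h x) d) (spectrum ℝ T) := by fun_prop
  calc (cfc h T).reApplyInnerSelf u ≤ (cfc (fun x => max (h x) d) T).reApplyInnerSelf u :=
        reApplyInnerSelf_cfc_mono hh hmax (fun x _ => le_max_left _ _) u
    _ = (cfc (fun _ => d) T).reApplyInnerSelf u := by
        rw [ContinuousLinearMap.reApplyInnerSelf_apply, ContinuousLinearMap.reApplyInnerSelf_apply,
          cfc_apply_eq_of_eqOn hu hmax continuousOn_const fun x hx => max_eq_right (hle x hx)]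
    _ = d * ‖u‖ ^ 2 := by rw [cfc_const d T hT, reApplyInnerSelf_algebraMap]

lemma norm_cfc_apply_sq_le_mul (hT : IsSelfAdjoint T) (hu : u ∈ spectralSubspace T S)
    (hg : ContinuousOn g (spectrum ℝ T)) (hle : ∀ x ∈ S ∩ spectrum ℝ T, g x ^ 2 ≤ d) :
    ‖cfc g T u‖ ^ 2 ≤ d * ‖u‖ ^ 2 :=
  (norm_cfc_apply_sq_s17 hg u).trans_le (reApplyInnerSelf_cfc_le hT hu (hg.pow 2) hle)

lemma norm_cfc_apply_le (hT : IsSelfAdjoint T) (hu : u ∈ spectralSubspace T S)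
    (hg : ContinuousOn g (spectrum ℝ T)) (hd : 0 ≤ d) (hle : ∀ x ∈ S ∩ spectrum ℝ T, |g x| ≤ d) :
    ‖cfc g T u‖ ≤ d * ‖u‖ := by
  have hsq := norm_cfc_apply_sq_le_mul hT hu hg (d := d ^ 2) fun x hx =>
    sq_le_sq' (abs_le.1 (hle x hx)).1 (abs_le.1 (hle x hx)).2
  rw [← mul_pow] at hsq
  exact le_of_sq_le_sq hsq (by positivity)

lemma sum_norm_cfc_apply_sq_le_s17 {κ : Type*} [Fintype κ] {ρ : κ → ℝ → ℝ} (hT : IsSelfAdjoint T)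
    (hu : u ∈ spectralSubspace T S) (hρ : ∀ k, ContinuousOn (ρ k) (spectrum ℝ T))
    (hle : ∀ x ∈ S ∩ spectrum ℝ T, ∑ k, ρ k x ^ 2 ≤ 1) :
    ∑ k, ‖cfc (ρ k) T u‖ ^ 2 ≤ ‖u‖ ^ 2 := by
  have hsum : cfc (fun x => ∑ k, ρ k x ^ 2) T = ∑ k, cfc (fun x => ρ k x ^ 2) T := by
    rw [← cfc_sum_univ (fun k x => ρ k x ^ 2) T fun k => (hρ k).pow 2, Finset.sum_fn]
  calc ∑ k, ‖cfc (ρ k) T u‖ ^ 2 = (cfc (fun x => ∑ k, ρ k x ^ 2) T).reApplyInnerSelf u := by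
        simp only [hsum, norm_cfc_apply_sq_s17 (hρ _), ContinuousLinearMap.reApplyInnerSelf_apply,
          sum_apply, sum_inner, map_sum]
    _ ≤ 1 * ‖u‖ ^ 2 := reApplyInnerSelf_cfc_le hT hu
        (continuousOn_finsetSum _ fun k _ => (hρ k).pow 2) hle
    _ = ‖u‖ ^ 2 := one_mul _

lemma exists_sum_eq_of_mem_spectralSubspace {κ : Type*} [Fintype κ] {U : κ → Set ℝ}
    (hT : IsSelfAdjoint T) (hS : IsClosed S) (hU : ∀ k, IsOpen (U k)) (hSU : S ⊆ ⋃ k, U k)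
    (hw : w ∈ spectralSubspace T S) :
    ∃ u : κ → 𝓗, (∀ k, u k ∈ spectralSubspace T (S ∩ U k)) ∧ ∑ k, u k = w ∧
      ∑ k, ‖u k‖ ^ 2 ≤ ‖w‖ ^ 2 := by
  obtain ⟨ρ, hρ⟩ := PartitionOfUnity.exists_isSubordinate hS U hU hSU
  have hcont : ∀ k, ContinuousOn (ρ k) (spectrum ℝ T) := fun k => (ρ k).continuous.continuousOn
  refine ⟨fun k => cfc (ρ k) T w, fun k => ?_, ?_, ?_⟩
  · exact cfc_apply_mem_spectralSubspace hw (hcont k) fun x hx =>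
      image_eq_zero_of_notMem_tsupport fun hxt => hx (hρ k hxt)
  · have hone : EqOn (fun x => ∑ k, ρ k x) (fun _ => 1) (S ∩ spectrum ℝ T) := fun x hx => by
      simpa only [finsum_eq_sum_of_fintype] using ρ.sum_eq_one hx.1
    rw [← sum_apply, ← cfc_sum_univ (fun k => ρ k) T hcont, Finset.sum_fn,
      cfc_apply_eq_of_eqOn hw (continuousOn_finsetSum _ fun k _ => hcont k) continuousOn_const hone,
      cfc_const_one ℝ T, one_apply_eq_self]
  · refine sum_norm_cfc_apply_sq_le_s17 hT hw hcont fun x _ => ?_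
    calc ∑ k, ρ k x ^ 2 ≤ ∑ k, ρ k x := Finset.sum_le_sum fun k _ =>
          pow_le_of_le_one (ρ.nonneg k x) (ρ.le_one k x) two_ne_zero
      _ ≤ 1 := by simpa only [finsum_eq_sum_of_fintype] using ρ.sum_le_one x

end FunctionalCalculus

section Convergence

variable {𝓗 : Type*} [NormedAddCommGroup 𝓗] [InnerProductSpace ℂ 𝓗]
  {ι : Type*} {l : Filter ι} {f g h : ℝ → ℝ} {I S : Set ℝ} {C d d' p q t δ η : ℝ} {u w : 𝓗}

lemma norm_map_sum_sq_le {κ : Type*} (B : 𝓗 →L[ℂ] 𝓗) (s : Finset κ) {u : κ → 𝓗} {d : κ → ℝ}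
    (hd : ∀ k ∈ s, 0 ≤ d k) (hB : ∀ k ∈ s, ‖B (u k)‖ ^ 2 ≤ d k * ‖u k‖ ^ 2) :
    ‖B (∑ k ∈ s, u k)‖ ^ 2 ≤ (∑ k ∈ s, d k) * ∑ k ∈ s, ‖u k‖ ^ 2 := by
  calc ‖B (∑ k ∈ s, u k)‖ ^ 2 ≤ (∑ k ∈ s, ‖B (u k)‖) ^ 2 := by
        rw [map_sum]
        gcongr
        exact norm_sum_le _ _
    _ ≤ _ := Finset.sum_sq_le_sum_mul_sum_of_sq_le_mul s hd (fun _ _ => sq_nonneg _) hB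

variable [CompleteSpace 𝓗] {A T : 𝓗 →L[ℂ] 𝓗} {H : ι → 𝓗 →L[ℂ] 𝓗}

lemma eventually_norm_apply_sq_le_sum (hT : IsSelfAdjoint T) (hpq : p < q)
    (hw : w ∈ spectralSubspace T (Icc p q)) (B : ι → 𝓗 →L[ℂ] 𝓗) {N : ℕ} (hN : 1 ≤ N) {d : ℕ → ℝ}
    (hd : ∀ k < N, 0 ≤ d k)
    (hB : ∀ k < N, ∀ u ∈ spectralSubspace T
      (Icc (gridCenter p q N k - mesh p q N) (gridCenter p q N k + mesh p q N)),
      ∀ᶠ i in l, ‖B i u‖ ^ 2 ≤ d k * ‖u‖ ^ 2) :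
    ∀ᶠ i in l, ‖B i w‖ ^ 2 ≤ (∑ k ∈ Finset.range N, d k) * ‖w‖ ^ 2 := by
  have hcover : Icc p q ⊆ ⋃ k : Fin N, gridCell p q N k := fun x _ => by
    obtain ⟨k, hk, hx⟩ := exists_mem_gridCell hpq hN x
    exact mem_iUnion.2 ⟨⟨k, hk⟩, hx⟩
  obtain ⟨u, hu, rfl, hnorm⟩ := exists_sum_eq_of_mem_spectralSubspace hT isClosed_Icc
    (fun k : Fin N => isOpen_gridCell p q N k) hcover hw
  have hall : ∀ᶠ i in l, ∀ k : Fin N, ‖B i (u k)‖ ^ 2 ≤ d k * ‖u k‖ ^ 2 :=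
    eventually_all.2 fun k => hB k k.2 (u k)
      (spectralSubspace_mono (Icc_inter_gridCell_subset hpq k.2) (hu k))
  filter_upwards [hall] with i hi
  calc ‖B i (∑ k, u k)‖ ^ 2 ≤ (∑ k : Fin N, d k) * ∑ k, ‖u k‖ ^ 2 :=
        norm_map_sum_sq_le (B i) Finset.univ (fun k _ => hd k k.2) (fun k _ => hi k)
    _ ≤ (∑ k : Fin N, d k) * ‖∑ k, u k‖ ^ 2 := by
        gcongr
        exact Finset.sum_nonneg fun k _ => hd k k.2
    _ = _ := by rw [Finset.sum_range]

lemma tendsto_apply_zero_of_grid (hT : IsSelfAdjoint T) (hpq : p < q)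
    (hw : w ∈ spectralSubspace T (Icc p q)) (B : ι → 𝓗 →L[ℂ] 𝓗) {d : ℕ → ℕ → ℝ}
    (hd : ∀ N, ∀ k < N, 0 ≤ d N k)
    (hsum : Tendsto (fun N => ∑ k ∈ Finset.range N, d N k) atTop (𝓝 0))
    (hB : ∀ N, ∀ k < N, ∀ u ∈ spectralSubspace T
      (Icc (gridCenter p q N k - mesh p q N) (gridCenter p q N k + mesh p q N)),
      ∀ᶠ i in l, ‖B i u‖ ^ 2 ≤ d N k * ‖u‖ ^ 2) :
    Tendsto (fun i => B i w) l (𝓝 0) := by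
  rw [NormedAddGroup.tendsto_nhds_zero]
  intro ε hε
  have hsmall : Tendsto (fun N => (∑ k ∈ Finset.range N, d N k) * ‖w‖ ^ 2) atTop (𝓝 0) := by
    simpa using hsum.mul_const (‖w‖ ^ 2)
  obtain ⟨N, hNε, hN⟩ :=
    ((hsmall.eventually (gt_mem_nhds (pow_pos hε 2))).and (eventually_ge_atTop 1)).exists
  filter_upwards [eventually_norm_apply_sq_le_sum hT hpq hw B hN (hd N) (hB N)] with i hi
  exact lt_of_pow_lt_pow_left₀ 2 hε.le (hi.trans_lt hNε)

lemma eventually_norm_cfc_apply_sq_le (hT : IsSelfAdjoint T) (hu : u ∈ spectralSubspace T S)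
    (hC : 0 < C) (hg : ∀ i, ContinuousOn g (spectrum ℝ (H i)))
    (hh : ∀ i, ContinuousOn h (spectrum ℝ (H i))) (hhT : ContinuousOn h (spectrum ℝ T))
    (hgh : ∀ i, ∀ x ∈ spectrum ℝ (H i), g x ^ 2 ≤ C * h x)
    (hlim : Tendsto (fun i => (cfc h (H i)).reApplyInnerSelf u) l
      (𝓝 ((cfc h T).reApplyInnerSelf u)))
    (hd : ∀ x ∈ S ∩ spectrum ℝ T, h x ≤ d) (hdd' : d < d') :
    ∀ᶠ i in l, ‖cfc g (H i) u‖ ^ 2 ≤ C * d' * ‖u‖ ^ 2 := by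
  rcases eq_or_ne u 0 with rfl | hu0
  · simp
  have hlt : (cfc h T).reApplyInnerSelf u < d' * ‖u‖ ^ 2 :=
    (reApplyInnerSelf_cfc_le hT hu hhT hd).trans_lt (by gcongr)
  filter_upwards [hlim.eventually_lt_const hlt] with i hi
  calc ‖cfc g (H i) u‖ ^ 2 ≤ (cfc (fun x => C * h x) (H i)).reApplyInnerSelf u :=
        norm_cfc_apply_sq_le (hg i) ((hh i).const_mul C) (hgh i) u
    _ = C * (cfc h (H i)).reApplyInnerSelf u := by
        rw [cfc_const_mul C h (H i) (hh i), ContinuousLinearMap.reApplyInnerSelf_apply, smul_apply,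
          inner_smul_left_eq_smul, RCLike.smul_re, ContinuousLinearMap.reApplyInnerSelf_apply]
    _ ≤ C * d' * ‖u‖ ^ 2 := by rw [mul_assoc]; gcongr

lemma tendsto_reApplyInnerSelf_cfc_lineGap (hsa : ∀ i, IsSelfAdjoint (H i))
    (hfH : ∀ i, ContinuousOn f (spectrum ℝ (H i))) (hT : IsSelfAdjoint T)
    (hfT : ContinuousOn f (spectrum ℝ T))
    (hlim : Tendsto (fun i => (H i).reApplyInnerSelf u) l (𝓝 (T.reApplyInnerSelf u)))
    (hflim : Tendsto (fun i => (cfc f (H i)).reApplyInnerSelf u) l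
      (𝓝 ((cfc f T).reApplyInnerSelf u))) (m s : ℝ) :
    Tendsto (fun i => (cfc (lineGap f m s) (H i)).reApplyInnerSelf u) l
      (𝓝 ((cfc (lineGap f m s) T).reApplyInnerSelf u)) := by
  simp only [fun i => reApplyInnerSelf_cfc_lineGap (hsa i) (hfH i),
    reApplyInnerSelf_cfc_lineGap hT hfT]
  exact (hflim.sub (hlim.const_mul s)).add_const _

lemma tendsto_cfc_overshoot_apply (hf : StrictConvexOn ℝ I f) (hfc : ContinuousOn f I)
    (hright : HasQuadraticGrowthRight f I)
    (hleft : HasQuadraticGrowthRight (fun x => f (-x)) (-I))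
    (hsa : ∀ i, IsSelfAdjoint (H i)) (hspec : ∀ i, spectrum ℝ (H i) ⊆ I)
    (hT : IsSelfAdjoint T) (hTspec : spectrum ℝ T ⊆ I)
    (hlim : ∀ u, Tendsto (fun i => (H i).reApplyInnerSelf u) l (𝓝 (T.reApplyInnerSelf u)))
    (hflim : ∀ u, Tendsto (fun i => (cfc f (H i)).reApplyInnerSelf u) l
      (𝓝 ((cfc f T).reApplyInnerSelf u)))
    (hp : p ∈ I) (hq : q ∈ I) (hpq : p < q) (hδ : 0 < δ)
    (hw : w ∈ spectralSubspace T (Icc p q)) :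
    Tendsto (fun i => cfc (overshoot (p - δ) (q + δ)) (H i) w) l (𝓝 0) := by
  have hsub : Icc p q ⊆ I := hf.1.ordConnected.out hp hq
  obtain ⟨C, hC, hover⟩ := exists_overshoot_sq_le_lineGap hf hp hq hδ hright hleft
  have hl : ∀ {N k}, k < N → gridCenter p q N k - mesh p q N ∈ I := fun hk =>
    hsub (gridCenter_sub_mesh_mem_Icc hpq hk)
  have hr : ∀ {N k}, k < N → gridCenter p q N k + mesh p q N ∈ I := fun hk =>
    hsub (gridCenter_add_mesh_mem_Icc hpq hk)
  have hpos : ∀ N, ∀ k < N, 0 < secondDifference f (mesh p q N) (gridCenter p q N k) :=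
    fun N k hk => secondDifference_pos hf (hl hk) (hr hk) (mesh_pos hpq N)
  -- The factor `2` leaves room for passing from the limiting quadratic form to those of `H i`.
  refine tendsto_apply_zero_of_grid hT hpq hw _
    (d := fun N k => C * (2 * secondDifference f (mesh p q N) (gridCenter p q N k)))
    (fun N k hk => by have := hpos N k hk; positivity) ?_ fun N k hk u hu => ?_
  · simp only [← Finset.mul_sum]
    simpa using ((tendsto_sum_secondDifference hpq (hfc.mono hsub)).const_mul 2).const_mul C
  · have hm := gridCenter_mem_Ioo hpq hk
    obtain ⟨s, hs⟩ := exists_isSubgradientOn hf.convexOn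
      (interior_mono hsub (by rwa [interior_Icc]))
    have hgap : ContinuousOn (lineGap f (gridCenter p q N k) s) I := by unfold lineGap; fun_prop
    exact eventually_norm_cfc_apply_sq_le hT hu hC
      (fun i => (continuous_overshoot _ _).continuousOn) (fun i => hgap.mono (hspec i))
      (hgap.mono hTspec) (fun i x hx => hover _ hm s hs x (hspec i hx))
      (tendsto_reApplyInnerSelf_cfc_lineGap hsa (fun i => hfc.mono (hspec i)) hT
        (hfc.mono hTspec) (hlim u) (hflim u) _ s)
      (fun x hx => hs.lineGap_le_secondDifference hf.convexOn (hl hk) (hr hk) hx.1)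
      (by linarith [hpos N k hk])

lemma apply_sub_smul_eq_cfc (hA : IsSelfAdjoint A) (t : ℝ) (u : 𝓗) :
    A u - t • u = cfc (fun x => x - t) A u := by
  rw [cfc_sub (fun x => x) (fun _ => t) A, cfc_id' ℝ A, cfc_const t A, sub_apply,
    Algebra.algebraMap_eq_smul_one, smul_apply, one_apply_eq_self]

lemma cfc_sub_const_eq_add_overshoot (A : 𝓗 →L[ℂ] 𝓗) (a b t : ℝ) :
    cfc (fun x => x - t) A = cfc (overshoot a b) A + cfc (fun x => clamp a b x - t) A := by
  rw [← cfc_add (a := A) (overshoot a b) (fun x => clamp a b x - t)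
    (by fun_prop) (by fun_prop)]
  exact cfc_congr fun x _ => by rw [overshoot]; ring

lemma eventually_norm_sub_apply_le (hsa : ∀ i, IsSelfAdjoint (H i)) (hT : IsSelfAdjoint T)
    (hη : 0 < η) (hu : u ∈ spectralSubspace T (Icc (t - η) (t + η)))
    (hover : Tendsto (fun i => cfc (overshoot (t - η - η) (t + η + η)) (H i) u) l (𝓝 0)) :
    ∀ᶠ i in l, ‖(H i - T) u‖ ≤ 4 * η * ‖u‖ := by
  rcases eq_or_ne u 0 with rfl | hu0
  · simp
  have hTu : ‖T u - t • u‖ ≤ η * ‖u‖ := by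
    rw [apply_sub_smul_eq_cfc hT]
    refine norm_cfc_apply_le hT hu (by fun_prop) hη.le fun x hx => ?_
    rw [abs_le]
    constructor <;> linarith [hx.1.1, hx.1.2]
  filter_upwards [hover.norm.eventually_lt_const
    (by rw [norm_zero]; positivity : ‖(0 : 𝓗)‖ < η * ‖u‖)] with i hi
  have hclamp : ‖cfc (fun x => clamp (t - η - η) (t + η + η) x - t) (H i) u‖ ≤ 2 * η * ‖u‖ := by
    refine norm_cfc_apply_le (hsa i) (mem_spectralSubspace_of_spectrum_subset (subset_univ _) u)
      (by fun_prop) (by positivity) fun x _ => ?_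
    have hx := clamp_mem_Icc (by linarith : t - η - η ≤ t + η + η) x
    rw [abs_le]
    constructor <;> linarith [hx.1, hx.2]
  calc ‖(H i - T) u‖ = ‖(H i u - t • u) - (T u - t • u)‖ := by
        rw [sub_apply, sub_sub_sub_cancel_right]
    _ ≤ ‖H i u - t • u‖ + ‖T u - t • u‖ := norm_sub_le _ _
    _ ≤ (η * ‖u‖ + 2 * η * ‖u‖) + η * ‖u‖ := by
        rw [apply_sub_smul_eq_cfc (hsa i), cfc_sub_const_eq_add_overshoot, add_apply]
        exact add_le_add ((norm_add_le _ _).trans (add_le_add hi.le hclamp)) hTu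
    _ = 4 * η * ‖u‖ := by ring

lemma tendsto_sum_sq_mesh (p q : ℝ) :
    Tendsto (fun N => ∑ _k ∈ Finset.range N, (4 * mesh p q N) ^ 2) atTop (𝓝 0) := by
  have heq : ∀ N : ℕ, ∑ _k ∈ Finset.range N, (4 * mesh p q N) ^ 2 =
      16 * (q - p) * (N / (N + 1)) * mesh p q N := by
    intro N
    rw [Finset.sum_const, Finset.card_range, nsmul_eq_mul, mesh]
    ring
  simp only [heq]
  simpa using ((tendsto_natCast_div_add_atTop (1 : ℝ)).const_mul (16 * (q - p))).mul
    (tendsto_mesh p q)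

lemma tendsto_apply_of_mem_spectralSubspace (hf : StrictConvexOn ℝ I f) (hfc : ContinuousOn f I)
    (hright : HasQuadraticGrowthRight f I)
    (hleft : HasQuadraticGrowthRight (fun x => f (-x)) (-I))
    (hsa : ∀ i, IsSelfAdjoint (H i)) (hspec : ∀ i, spectrum ℝ (H i) ⊆ I)
    (hT : IsSelfAdjoint T) (hTspec : spectrum ℝ T ⊆ I)
    (hlim : ∀ u, Tendsto (fun i => (H i).reApplyInnerSelf u) l (𝓝 (T.reApplyInnerSelf u)))
    (hflim : ∀ u, Tendsto (fun i => (cfc f (H i)).reApplyInnerSelf u) l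
      (𝓝 ((cfc f T).reApplyInnerSelf u)))
    (hp : p ∈ I) (hq : q ∈ I) (hpq : p < q) (hw : w ∈ spectralSubspace T (Icc p q)) :
    Tendsto (fun i => H i w) l (𝓝 (T w)) := by
  have hdiff : Tendsto (fun i => (H i - T) w) l (𝓝 0) := by
    refine tendsto_apply_zero_of_grid hT hpq hw _ (fun N k _ => sq_nonneg (4 * mesh p q N))
      (tendsto_sum_sq_mesh p q) fun N k hk u hu => ?_
    have hη := mesh_pos hpq N
    have hsub : Icc p q ⊆ I := hf.1.ordConnected.out hp hq
    have hover := tendsto_cfc_overshoot_apply hf hfc hright hleft hsa hspec hT hTspec hlim hflim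
      (hsub (gridCenter_sub_mesh_mem_Icc hpq hk)) (hsub (gridCenter_add_mesh_mem_Icc hpq hk))
      (by linarith) hη hu
    filter_upwards [eventually_norm_sub_apply_le hsa hT hη hu hover] with i hi
    rw [← mul_pow]
    gcongr
  simpa only [sub_apply, tendsto_sub_nhds_zero_iff] using hdiff

end Convergence

lemma exists_Icc_of_isCompact {I K : Set ℝ} (hI : I.Nontrivial) (hK : IsCompact K) (hKI : K ⊆ I) :
    ∃ p ∈ I, ∃ q ∈ I, p < q ∧ K ⊆ Icc p q := by
  obtain ⟨x, hx, y, hy, hxy⟩ := hI.exists_lt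
  have hcomp : IsCompact (insert x (insert y K)) := (hK.insert y).insert x
  have hsub : insert x (insert y K) ⊆ I := insert_subset hx (insert_subset hy hKI)
  obtain ⟨p, hpK, hp⟩ := hcomp.exists_isLeast (insert_nonempty _ _)
  obtain ⟨q, hqK, hq⟩ := hcomp.exists_isGreatest (insert_nonempty _ _)
  refine ⟨p, hsub hpK, q, hsub hqK, ?_, fun z hz => ?_⟩
  · exact ((hp (mem_insert _ _)).trans_lt hxy).trans_le
      (hq (mem_insert_of_mem _ (mem_insert _ _)))
  · have hz' : z ∈ insert x (insert y K) := mem_insert_of_mem _ (mem_insert_of_mem _ hz)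
    exact ⟨hp hz', hq hz'⟩

lemma eq_of_spectrum_subset_subsingleton {𝓗 : Type*} [NormedAddCommGroup 𝓗]
    [InnerProductSpace ℂ 𝓗] [CompleteSpace 𝓗] {I : Set ℝ} {A T : 𝓗 →L[ℂ] 𝓗}
    (hI : I.Subsingleton) (hA : IsSelfAdjoint A) (hAspec : spectrum ℝ A ⊆ I)
    (hT : IsSelfAdjoint T) (hTspec : spectrum ℝ T ⊆ I) : A = T := by
  obtain ⟨a, ha⟩ : ∃ a, I ⊆ {a} := by
    rcases hI.eq_empty_or_singleton with rfl | ⟨a, rfl⟩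
    · exact ⟨0, empty_subset _⟩
    · exact ⟨a, subset_rfl⟩
  rw [CFC.eq_algebraMap_of_spectrum_subset_singleton A a (hAspec.trans ha),
    CFC.eq_algebraMap_of_spectrum_subset_singleton T a (hTspec.trans ha)]

end

/-- **Remark 2.6(iii), second part.** Under the hypotheses of Theorem 2.1, if in
addition `f(x) > 0` for `x` sufficiently large and `x² = O(f(x))` as `x → ∞` (when `I`
is unbounded on the right), and symmetrically on the left, then `(Hᵢ)` converges
strongly to `H`. -/
theorem stmt_17 {𝓗 : Type*} [NormedAddCommGroup 𝓗] [InnerProductSpace ℂ 𝓗]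
    [CompleteSpace 𝓗]
    {ι : Type*} (l : Filter ι) [l.NeBot]
    (I : Set ℝ) (hI : I.OrdConnected)
    (f : ℝ → ℝ) (hf : StrictConvexOn ℝ I f) (hfc : ContinuousOn f I)
    (H : ι → 𝓗 →L[ℂ] 𝓗) (hsa : ∀ i, IsSelfAdjoint (H i))
    (hspec : ∀ i, spectrum ℝ (H i) ⊆ I)
    (T : 𝓗 →L[ℂ] 𝓗) (hTsa : IsSelfAdjoint T) (hTspec : spectrum ℝ T ⊆ I)
    (hWOT : ∀ v w : 𝓗, Tendsto (fun i => ⟪(H i) v, w⟫_ℂ) l (𝓝 ⟪T v, w⟫_ℂ))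
    (hfWOT : ∀ v w : 𝓗,
      Tendsto (fun i => ⟪(cfc f (H i)) v, w⟫_ℂ) l (𝓝 ⟪(cfc f T) v, w⟫_ℂ))
    (hright : ¬ BddAbove I →
      (∃ R : ℝ, ∀ x ∈ I, R < x → 0 < f x) ∧
      (∃ C : ℝ, 0 < C ∧ ∃ R : ℝ, ∀ x ∈ I, R < x → x ^ 2 ≤ C * f x))
    (hleft : ¬ BddBelow I →
      (∃ R : ℝ, ∀ x ∈ I, x < R → 0 < f x) ∧
      (∃ C : ℝ, 0 < C ∧ ∃ R : ℝ, ∀ x ∈ I, x < R → x ^ 2 ≤ C * f x)) :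
    ∀ v : 𝓗, Tendsto (fun i => (H i) v) l (𝓝 (T v)) := by
  intro v
  rcases I.subsingleton_or_nontrivial with hsub | hnontriv
  · simpa only [fun i => eq_of_spectrum_subset_subsingleton hsub (hsa i) (hspec i) hTsa hTspec]
      using tendsto_const_nhds
  obtain ⟨p, hp, q, hq, hpq, hTpq⟩ :=
    exists_Icc_of_isCompact hnontriv (spectrum.isCompact T) hTspec
  exact tendsto_apply_of_mem_spectralSubspace hf hfc
    (hasQuadraticGrowthRight_of_not_bddAbove_imp fun h => (hright h).2)
    (hasQuadraticGrowthRight_comp_neg_of_not_bddBelow_imp fun h => (hleft h).2)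
    hsa hspec hTsa hTspec
    (fun u => (RCLike.continuous_re.tendsto _).comp (hWOT u u))
    (fun u => (RCLike.continuous_re.tendsto _).comp (hfWOT u u))
    hp hq hpq (mem_spectralSubspace_of_spectrum_subset hTpq v)
end
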